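/- arXiv:2305.12942 — 2 statements merged into one kernel-verified Lean document; each statement's English description precedes it below -/
import Mathlib

section
/- Let R be a finite commutative ring with γ_a(Γ(R)) = 2. Then Γ(R) is partitionable into global defensive alliances if and only if either ψ_g(Γ(R)) = 2 or R ≅ 𝔽₄ × 𝔽₄. -/
open Classical

/-- The set of zero-divisors of `R` (including `0`). -/
def zeroDivisorSet (R : Type*) [CommRing R] : Set R :=
  {x : R | ∃ y : R, y ≠ 0 ∧ x * y = 0}

/-- Vertices of the zero-divisor graph: the nonzero zero-divisors of `R`. -/
abbrev ZDV (R : Type*) [CommRing R] : Type _ :=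
  {x : R // x ≠ 0 ∧ ∃ y : R, y ≠ 0 ∧ x * y = 0}

/-- The zero-divisor graph `Γ(R)` of a commutative ring `R`: vertices are the nonzero
zero-divisors, and distinct vertices `x`, `y` are adjacent iff `x * y = 0`. -/
def zdGraph (R : Type*) [CommRing R] : SimpleGraph (ZDV R) where
  Adj a b := a ≠ b ∧ (a : R) * (b : R) = 0
  symm := by
    constructor
    intro a b h
    exact ⟨h.1.symm, by rw [mul_comm]; exact h.2⟩
  loopless := by
    constructor
    intro a h
    exact h.1 rfl

/-- `degIn G S v` is the number of neighbors of `v` lying in `S`. -/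
noncomputable def degIn {V : Type*} (G : SimpleGraph V) (S : Set V) (v : V) : ℕ :=
  Set.ncard {u : V | u ∈ S ∧ G.Adj v u}

/-- `S` is a dominating set: every vertex outside `S` has a neighbor in `S`. -/
def IsDominatingSet {V : Type*} (G : SimpleGraph V) (S : Set V) : Prop :=
  ∀ v ∉ S, ∃ u ∈ S, G.Adj v u

/-- `S` is a defensive alliance: `S` is nonempty and every `v ∈ S` satisfies
`deg_S(v) + 1 ≥ deg_{Sᶜ}(v)`. -/
def IsDefensiveAlliance {V : Type*} (G : SimpleGraph V) (S : Set V) : Prop :=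
  S.Nonempty ∧ ∀ v ∈ S, degIn G Sᶜ v ≤ degIn G S v + 1

/-- A global defensive alliance is a defensive alliance that is also a dominating set. -/
def IsGlobalDefensiveAlliance {V : Type*} (G : SimpleGraph V) (S : Set V) : Prop :=
  IsDefensiveAlliance G S ∧ IsDominatingSet G S

/-- `P` is a partition of the vertex set of `G` into global defensive alliances. -/
def IsGDAPartition {V : Type*} (G : SimpleGraph V) (P : Finset (Set V)) : Prop :=
  (∀ S ∈ P, IsGlobalDefensiveAlliance G S) ∧
  (⋃₀ (P : Set (Set V)) = Set.univ) ∧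
  ((P : Set (Set V)).Pairwise Disjoint)

/-- The global defensive alliance partition number `ψ_g(G)`: the maximum number of parts in
a partition of the vertex set into global defensive alliances. -/
noncomputable def psiG {V : Type*} (G : SimpleGraph V) : ℕ :=
  sSup {n : ℕ | ∃ P : Finset (Set V), IsGDAPartition G P ∧ P.card = n}

/-- `G` is partitionable into global defensive alliances iff `ψ_g(G) ≥ 2`. -/
def PartitionableGDA {V : Type*} (G : SimpleGraph V) : Prop :=
  2 ≤ psiG G

/-- The global defensive alliance number `γ_a(G)`: the minimum cardinality of a global
defensive alliance. -/
noncomputable def gammaA {V : Type*} (G : SimpleGraph V) : ℕ :=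
  sInf {n : ℕ | ∃ S : Set V, IsGlobalDefensiveAlliance G S ∧ S.ncard = n}


lemma aux_psi_mem {V : Type*} [Finite V] (G : SimpleGraph V) (h : psiG G ≠ 0) :
    ∃ P : Finset (Set V), IsGDAPartition G P ∧ P.card = psiG G := by
  have hb : BddAbove {n : ℕ | ∃ P : Finset (Set V), IsGDAPartition G P ∧ P.card = n} := by
    have := Fintype.ofFinite (Set V)
    refine ⟨Fintype.card (Set V), ?_⟩
    rintro n ⟨P, -, rfl⟩
    exact Finset.card_le_univ P
  have hne : {n : ℕ | ∃ P : Finset (Set V), IsGDAPartition G P ∧ P.card = n}.Nonempty := by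
    by_contra hc
    rw [Set.not_nonempty_iff_eq_empty] at hc
    apply h
    unfold psiG
    rw [hc]; simp
  exact Nat.sSup_mem hne hb

lemma aux_psi_ge {V : Type*} [Finite V] (G : SimpleGraph V) (P : Finset (Set V))
    (hP : IsGDAPartition G P) : P.card ≤ psiG G := by
  have hb : BddAbove {n : ℕ | ∃ P : Finset (Set V), IsGDAPartition G P ∧ P.card = n} := by
    have := Fintype.ofFinite (Set V)
    refine ⟨Fintype.card (Set V), ?_⟩
    rintro n ⟨P, -, rfl⟩
    exact Finset.card_le_univ P
  exact le_csSup hb ⟨P, hP, rfl⟩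

lemma aux_deg_split {V : Type*} [Finite V] (G : SimpleGraph V) (S : Set V) (v : V) :
    degIn G S v + degIn G Sᶜ v = (G.neighborSet v).ncard := by
  unfold degIn
  rw [← Set.ncard_union_eq]
  · congr 1
    ext u
    simp only [Set.mem_union, Set.mem_setOf_eq, Set.mem_compl_iff, SimpleGraph.mem_neighborSet]
    tauto
  · rw [Set.disjoint_left]
    rintro u ⟨h1, -⟩ ⟨h2, -⟩
    exact h2 h1

lemma aux_pair {V : Type*} [Finite V] (G : SimpleGraph V)
    (hmin : ∀ v, 2 ≤ (G.neighborSet v).ncard) (S : Set V)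
    (hS : IsGlobalDefensiveAlliance G S) (h2 : S.ncard = 2) :
    ∃ a b, S = {a, b} ∧ G.Adj a b ∧ (G.neighborSet a).ncard ≤ 3 ∧
      (G.neighborSet b).ncard ≤ 3 ∧ G.neighborSet a ∪ G.neighborSet b = Set.univ := by
  obtain ⟨a, b, hab, rfl⟩ := Set.ncard_eq_two.1 h2
  obtain ⟨⟨-, hd⟩, hdom⟩ := hS
  have key : ∀ x y : V, ({a, b} : Set V) = {x, y} →
      degIn G {a, b} x ≤ 1 ∧ (¬ G.Adj x y → degIn G {a, b} x = 0) := by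
    intro x y hxy
    rw [hxy]
    unfold degIn
    constructor
    · refine (Set.ncard_le_ncard (t := {y}) ?_ (Set.toFinite _)).trans (by simp)
      rintro u ⟨hu | hu, hadj⟩
      · subst hu; exact absurd hadj (G.irrefl)
      · exact hu
    · intro hn
      rw [Set.ncard_eq_zero (Set.toFinite _)]
      ext u
      simp only [Set.mem_setOf_eq, Set.mem_empty_iff_false, iff_false]
      rintro ⟨hu | hu, hadj⟩
      · subst hu; exact absurd hadj (G.irrefl)
      · rw [Set.mem_singleton_iff] at hu; subst hu; exact hn hadj
  have ka := key a b rfl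
  have kb := key b a (Set.pair_comm a b)
  have sa := aux_deg_split G {a, b} a
  have sb := aux_deg_split G {a, b} b
  have da := hd a (by simp)
  have db := hd b (by simp)
  have ma := hmin a
  have mb := hmin b
  have adj : G.Adj a b := by
    by_contra hn
    have := ka.2 hn
    omega
  refine ⟨a, b, rfl, adj, by omega, by omega, ?_⟩
  rw [Set.eq_univ_iff_forall]
  intro v
  by_cases hv : v ∈ ({a, b} : Set V)
  · rcases hv with hv | hv
    · subst hv; right; exact adj.symm
    · rw [Set.mem_singleton_iff] at hv; subst hv; left; exact adj
  · obtain ⟨u, hu, hadj⟩ := hdom v hv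
    rcases hu with hu | hu
    · subst hu; left; exact hadj.symm
    · rw [Set.mem_singleton_iff] at hu; subst hu; right; exact hadj.symm

lemma aux_graph {V : Type*} [Finite V] (G : SimpleGraph V) (h : gammaA G = 2)
    (hpsi : 3 ≤ psiG G) :
    Nonempty V ∧ ∀ v, ∃ w, G.Adj v w ∧ (G.neighborSet v).ncard = 3 ∧
      (G.neighborSet w).ncard = 3 ∧ Disjoint (G.neighborSet v) (G.neighborSet w) := by
  obtain ⟨P, ⟨hP1, hP2, hP3⟩, hPc⟩ := aux_psi_mem G (by omega)
  rw [← hPc] at hpsi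
  have hge : ∀ S, IsGlobalDefensiveAlliance G S → 2 ≤ S.ncard := by
    intro S hS
    rw [← h]
    exact Nat.sInf_le ⟨S, hS, rfl⟩
  have hex : ∃ S : Set V, IsGlobalDefensiveAlliance G S ∧ S.ncard = 2 := by
    have : gammaA G ∈ {n : ℕ | ∃ S : Set V, IsGlobalDefensiveAlliance G S ∧ S.ncard = n} := by
      apply Nat.sInf_mem
      obtain ⟨S, hS⟩ := Finset.card_pos.1 (by omega : 0 < P.card)
      exact ⟨_, S, hP1 S hS, rfl⟩
    rwa [h] at this
  have hpart : ∀ v, ∃ S ∈ P, v ∈ S := by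
    intro v
    have : v ∈ ⋃₀ (P : Set (Set V)) := by rw [hP2]; trivial
    obtain ⟨S, hS, hv⟩ := this
    exact ⟨S, hS, hv⟩
  have hmin : ∀ v, 2 ≤ (G.neighborSet v).ncard := by
    intro v
    obtain ⟨S, hS, hv⟩ := hpart v
    have hc : 1 < (P.erase S).card := by rw [Finset.card_erase_of_mem hS]; omega
    obtain ⟨A, hA, B, hB, hAB⟩ := Finset.one_lt_card.1 hc
    rw [Finset.mem_erase] at hA hB
    have hvA : v ∉ A := fun hvA =>
      Set.disjoint_left.1 (hP3 hA.2 hS hA.1) hvA hv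
    have hvB : v ∉ B := fun hvB =>
      Set.disjoint_left.1 (hP3 hB.2 hS hB.1) hvB hv
    obtain ⟨x, hx, hvx⟩ := (hP1 A hA.2).2 v hvA
    obtain ⟨y, hy, hvy⟩ := (hP1 B hB.2).2 v hvB
    have hxy : x ≠ y := by
      rintro rfl
      exact Set.disjoint_left.1 (hP3 hA.2 hB.2 hAB) hx hy
    rw [← Set.ncard_pair hxy]
    apply Set.ncard_le_ncard _ (Set.toFinite _)
    rintro u (hu | hu)
    · subst hu; exact hvx
    · rw [Set.mem_singleton_iff] at hu; subst hu; exact hvy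
  have hle : Nat.card V ≤ 6 := by
    obtain ⟨S, hS, hS2⟩ := hex
    obtain ⟨a, b, -, -, ha, hb, hu⟩ := aux_pair G hmin S hS hS2
    rw [← Set.ncard_univ, ← hu]
    exact (Set.ncard_union_le _ _).trans (by omega)
  have hsum : ∑ S ∈ P, S.ncard = Nat.card V := by
    have := Fintype.ofFinite V
    have h1 : ∀ S : Set V, S.ncard = S.toFinset.card := fun S => Set.ncard_eq_toFinset_card' S
    simp_rw [h1]
    rw [← Finset.card_biUnion, Nat.card_eq_fintype_card, ← Finset.card_univ]
    · congr 1
      ext v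
      simpa using hpart v
    · intro A hA B hB hAB
      change Disjoint A.toFinset B.toFinset
      rw [Set.disjoint_toFinset]
      exact hP3 hA hB hAB
  have h2 : ∀ S ∈ P, S.ncard = 2 ∧ 6 ≤ Nat.card V := by
    intro S hS
    rw [← Finset.add_sum_erase P _ hS] at hsum
    have hlow : (P.erase S).card * 2 ≤ ∑ T ∈ P.erase S, T.ncard := by
      rw [← smul_eq_mul]
      apply Finset.card_nsmul_le_sum
      intro T hT
      exact hge T (hP1 T (Finset.mem_of_mem_erase hT))
    rw [Finset.card_erase_of_mem hS] at hlow
    have := hge S (hP1 S hS)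
    omega
  constructor
  · obtain ⟨S, hS⟩ := Finset.card_pos.1 (by omega : 0 < P.card)
    obtain ⟨x, -⟩ := (hP1 S hS).1.1
    exact ⟨x⟩
  · intro v
    obtain ⟨S, hS, hv⟩ := hpart v
    obtain ⟨hS2, h6⟩ := h2 S hS
    obtain ⟨a, b, hSab, hadj, ha, hb, hu⟩ := aux_pair G hmin S (hP1 S hS) hS2
    have hui := Set.ncard_union_add_ncard_inter (G.neighborSet a) (G.neighborSet b)
    rw [hu, Set.ncard_univ] at hui
    have hdis : Disjoint (G.neighborSet a) (G.neighborSet b) := by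
      rw [Set.disjoint_iff_inter_eq_empty, ← Set.ncard_eq_zero (Set.toFinite _)]
      omega
    rw [hSab] at hv
    rcases hv with hv | hv
    · subst hv
      exact ⟨b, hadj, by omega, by omega, hdis⟩
    · rw [Set.mem_singleton_iff] at hv; subst hv
      exact ⟨a, hadj.symm, by omega, by omega, hdis.symm⟩

/-- The annihilator of an element, as an ideal. -/
def annI {R : Type*} [CommRing R] (a : R) : Ideal R where
  carrier := {x | a * x = 0}
  add_mem' := by intro x y hx hy; simp only [Set.mem_setOf_eq] at *; rw [mul_add, hx, hy, add_zero]
  zero_mem' := by simp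
  smul_mem' := by
    intro c x hx
    simp only [Set.mem_setOf_eq, smul_eq_mul] at *
    rw [mul_left_comm, hx, mul_zero]

lemma mem_annI {R : Type*} [CommRing R] (a x : R) : x ∈ annI a ↔ a * x = 0 := Iff.rfl

lemma aux_nbr {R : Type*} [CommRing R] [Finite R] (v : ZDV R) :
    Subtype.val '' ((zdGraph R).neighborSet v) = (annI (v : R) : Set R) \ {0, (v : R)} := by
  ext x
  simp only [Set.mem_image, SimpleGraph.mem_neighborSet, Set.mem_diff, SetLike.mem_coe, mem_annI,
    Set.mem_insert_iff, Set.mem_singleton_iff, not_or]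
  constructor
  · rintro ⟨u, hu, rfl⟩
    exact ⟨hu.2, u.2.1, fun hc => hu.1 (Subtype.ext hc.symm)⟩
  · rintro ⟨h1, h2, h3⟩
    refine ⟨⟨x, h2, v, v.2.1, by rw [mul_comm]; exact h1⟩, ⟨?_, h1⟩, rfl⟩
    intro hc
    exact h3 (by rw [hc])

lemma aux_card {R : Type*} [CommRing R] [Finite R] (v : ZDV R) (w : ZDV R)
    (hvw : (zdGraph R).Adj v w) (h3 : ((zdGraph R).neighborSet v).ncard = 3)
    (hd : Disjoint ((zdGraph R).neighborSet v) ((zdGraph R).neighborSet w)) :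
    Nat.card (annI (v : R)) = 4 ∧ (v : R) * v ≠ 0 := by
  have hn := aux_nbr v
  have hc : ((annI (v : R) : Set R) \ {0, (v : R)}).ncard = 3 := by
    rw [← hn, Set.ncard_image_of_injective _ Subtype.val_injective, h3]
  have hsq : (v : R) * v ≠ 0 := by
    intro h0
    have hsub : ({0, (v : R)} : Set R) ⊆ (annI (v : R) : Set R) := by
      rintro x (hx | hx)
      · subst hx; simp
      · rw [Set.mem_singleton_iff] at hx; subst hx; exact h0
    have h5 : Nat.card (annI (v : R)) = 5 := by
      have := Set.ncard_diff_add_ncard_of_subset hsub (Set.toFinite _)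
      rw [hc, Set.ncard_pair v.2.1.symm] at this
      exact this.symm
    have : Fact (Nat.Prime 5) := ⟨by norm_num⟩
    have hgen : ∀ x : R, (v : R) * x = 0 → ∃ k : ℤ, x = k • (v : R) := by
      intro x hx
      have hm := mem_zmultiples_of_prime_card (G := annI (v : R)) (p := 5) h5
        (g := ⟨v, h0⟩) (g' := ⟨x, hx⟩) (by
          intro hc; exact v.2.1 (congrArg Subtype.val hc))
      obtain ⟨k, hk⟩ := AddSubgroup.mem_zmultiples_iff.1 hm
      exact ⟨k, by simpa using (congrArg Subtype.val hk).symm⟩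
    obtain ⟨k, hk⟩ := hgen w hvw.2
    -- a neighbour of v other than w
    obtain ⟨c, hcv, hcw⟩ : ∃ c ∈ (zdGraph R).neighborSet v, c ≠ w :=
      Set.exists_ne_of_one_lt_ncard (by omega) w
    refine Set.disjoint_left.1 hd hcv ⟨hcw.symm, ?_⟩
    rw [hk, smul_mul_assoc, hcv.2, smul_zero]
  refine ⟨?_, hsq⟩
  have : (annI (v : R) : Set R) \ {0, (v : R)} = (annI (v : R) : Set R) \ {0} := by
    ext x
    simp only [Set.mem_diff, SetLike.mem_coe, Set.mem_insert_iff, Set.mem_singleton_iff, not_or]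
    constructor
    · rintro ⟨h1, h2, -⟩; exact ⟨h1, h2⟩
    · rintro ⟨h1, h2⟩; exact ⟨h1, h2, by rintro rfl; exact hsq h1⟩
  rw [this] at hc
  have h2 := Set.ncard_diff_singleton_add_one (s := (annI (v : R) : Set R)) (a := 0)
    (by simp) (Set.toFinite _)
  rw [hc] at h2
  exact h2.symm

lemma aux_field {R : Type*} [CommRing R] [Finite R] (a : ZDV R)
    (hall : ∀ v : ZDV R, Nat.card (annI (v : R)) = 4)
    (hq : Nat.card (R ⧸ annI (a : R)) = 4) :
    Nonempty ((R ⧸ annI (a : R)) ≃+* GaloisField 2 2) := by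
  have hp : (annI (a : R)).IsPrime := by
    refine ⟨?_, ?_⟩
    · intro ht
      have : (1 : R) ∈ annI (a : R) := by rw [ht]; trivial
      rw [mem_annI, mul_one] at this
      exact a.2.1 this
    · intro x y hxy
      by_cases hy : (a : R) * y = 0
      · right; exact hy
      · left
        obtain ⟨z, hz, haz⟩ := a.2.2
        let c : ZDV R := ⟨a * y, hy, z, hz, by rw [mul_right_comm, haz, zero_mul]⟩
        have hle : (annI (a : R) : Set R) ⊆ annI ((a : R) * y) := by
          intro t ht
          change (a : R) * t = 0 at ht
          change (a : R) * y * t = 0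
          rw [mul_right_comm, ht, zero_mul]
        have heq : (annI (a : R) : Set R) = annI ((a : R) * y) := by
          apply Set.eq_of_subset_of_ncard_le hle _ (Set.toFinite _)
          have h1 : (annI ((a : R) * y) : Set R).ncard = 4 := hall c
          have h2 : (annI (a : R) : Set R).ncard = 4 := hall a
          omega
        have : x ∈ (annI ((a : R) * y) : Set R) := by
          change (a : R) * y * x = 0
          rw [mul_assoc, mul_comm y x]; exact hxy
        rw [← heq] at this
        exact this
  have : IsDomain (R ⧸ annI (a : R)) := Ideal.Quotient.isDomain _
  have : Finite (R ⧸ annI (a : R)) := Nat.finite_of_card_ne_zero (by omega)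
  have := Fintype.ofFinite (R ⧸ annI (a : R))
  letI : Field (R ⧸ annI (a : R)) := Fintype.fieldOfDomain _
  have := Fintype.ofFinite (GaloisField 2 2)
  refine ⟨FiniteField.ringEquivOfCardEq ?_⟩
  rw [← Nat.card_eq_fintype_card, ← Nat.card_eq_fintype_card, hq, GaloisField.card 2 2 (by norm_num)]
  norm_num

lemma aux_ring {R : Type*} [CommRing R] [Finite R] (a b : ZDV R)
    (hall : ∀ v : ZDV R, Nat.card (annI (v : R)) = 4 ∧ (v : R) * v ≠ 0)
    (hab : (zdGraph R).Adj a b)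
    (hd : Disjoint ((zdGraph R).neighborSet a) ((zdGraph R).neighborSet b)) :
    Nonempty (R ≃+* (GaloisField 2 2 × GaloisField 2 2)) := by
  have hint : ∀ x : R, (a : R) * x = 0 → (b : R) * x = 0 → x = 0 := by
    intro x hax hbx
    by_contra hx
    let c : ZDV R := ⟨x, hx, a, a.2.1, by rw [mul_comm]; exact hax⟩
    have hdl := Set.disjoint_left.1 hd
    refine @hdl c ⟨?_, hax⟩ ⟨?_, hbx⟩
    · rintro hc
      have : (a : R) = x := congrArg Subtype.val hc
      exact (hall a).2 (by rw [← this] at hax; exact hax)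
    · rintro hc
      have : (b : R) = x := congrArg Subtype.val hc
      exact (hall b).2 (by rw [← this] at hbx; exact hbx)
  have hge : 16 ≤ Nat.card R := by
    have hinj : Function.Injective (fun p : annI (a : R) × annI (b : R) => (p.1 : R) + p.2) := by
      rintro ⟨x, y⟩ ⟨x', y'⟩ he
      simp only at he
      have hx : (x : R) - x' = 0 := by
        apply hint
        · have := x.2; have := x'.2; simp only [mem_annI] at *; rw [mul_sub]; simp [*]
        · have h1 := y.2; have h2 := y'.2; simp only [mem_annI] at h1 h2
          have : (x : R) - x' = y' - y := by linear_combination he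
          rw [this, mul_sub, h1, h2, sub_zero]
      have hx' : (x : R) = x' := sub_eq_zero.1 hx
      have hy' : (y : R) = y' := by rw [hx'] at he; exact add_left_cancel he
      exact Prod.ext (Subtype.ext hx') (Subtype.ext hy')
    have := Nat.card_le_card_of_injective _ hinj
    rwa [Nat.card_prod, (hall a).1, (hall b).1] at this
  -- quotient sizes
  have hquot : ∀ u w : ZDV R, (u : R) * w = 0 → Nat.card (R ⧸ annI (u : R)) ≤ 4 := by
    intro u w huw
    rw [← (hall w).1]
    let f : R →+ annI (w : R) :=
      { toFun := fun x => ⟨(u : R) * x, by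
          rw [mem_annI, ← mul_assoc, mul_comm (w : R), huw, zero_mul]⟩
        map_zero' := by ext; simp
        map_add' := by intro x y; ext; simp [mul_add] }
    have hf : Function.Injective (QuotientAddGroup.lift (annI (u : R)).toAddSubgroup f (by
        intro x hx; exact Subtype.ext hx)) := by
      rw [injective_iff_map_eq_zero]
      intro x
      induction x using QuotientAddGroup.induction_on with
      | H x =>
        intro hx
        rw [QuotientAddGroup.eq_zero_iff]
        exact congrArg Subtype.val hx
    exact Nat.card_le_card_of_injective _ hf
  have hmul : ∀ u : ZDV R, Nat.card R = Nat.card (R ⧸ annI (u : R)) * 4 := by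
    intro u
    rw [← (hall u).1]
    exact AddSubgroup.card_eq_card_quotient_mul_card_addSubgroup (annI (u : R)).toAddSubgroup
  have qa : Nat.card (R ⧸ annI (a : R)) = 4 := by
    have := hquot a b hab.2; have := hmul a; omega
  have qb : Nat.card (R ⧸ annI (b : R)) = 4 := by
    have := hquot b a hab.symm.2; have := hmul b; omega
  obtain ⟨ea⟩ := aux_field a (fun v => (hall v).1) qa
  obtain ⟨eb⟩ := aux_field b (fun v => (hall v).1) qb
  let φ : R →+* (R ⧸ annI (a : R)) × (R ⧸ annI (b : R)) :=
    (Ideal.Quotient.mk _).prod (Ideal.Quotient.mk _)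
  have hφ : Function.Injective φ := by
    rw [injective_iff_map_eq_zero]
    intro x hx
    have h1 := congrArg Prod.fst hx
    have h2 := congrArg Prod.snd hx
    exact hint x (Ideal.Quotient.eq_zero_iff_mem.1 h1) (Ideal.Quotient.eq_zero_iff_mem.1 h2)
  have : Finite (R ⧸ annI (a : R)) := Nat.finite_of_card_ne_zero (by omega)
  have : Finite (R ⧸ annI (b : R)) := Nat.finite_of_card_ne_zero (by omega)
  have hbij : Function.Bijective φ := by
    rw [Nat.bijective_iff_injective_and_card]
    refine ⟨hφ, ?_⟩
    rw [Nat.card_prod, qb, hmul a, qa]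
  exact ⟨(RingEquiv.ofBijective φ hbij).trans (RingEquiv.prodCongr ea eb)⟩

lemma aux_conv {R : Type*} [CommRing R] [Finite R]
    (e : R ≃+* (GaloisField 2 2 × GaloisField 2 2)) : 2 ≤ psiG (zdGraph R) := by
  have h4 : Nat.card (GaloisField 2 2) = 4 := by
    rw [GaloisField.card 2 2 (by norm_num)]; norm_num
  obtain ⟨t, ht0, ht1⟩ : ∃ t : GaloisField 2 2, t ≠ 0 ∧ t ≠ 1 := by
    have := Fintype.ofFinite (GaloisField 2 2)
    by_contra hc
    push Not at hc
    have hs : (Set.univ : Set (GaloisField 2 2)) ⊆ {0, 1} := by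
      intro x _
      by_cases hx : x = 0
      · left; exact hx
      · right; exact hc x hx
    have h1 := Set.ncard_le_ncard hs (Set.toFinite _)
    rw [Set.ncard_univ, h4, Set.ncard_pair zero_ne_one] at h1
    omega
  -- vertices
  have mk : ∀ x y : GaloisField 2 2, (x, y) ≠ 0 → x * y = 0 → 
      ∃ v : ZDV R, e v = (x, y) := by
    intro x y h0 hxy
    have hz : ∃ z : GaloisField 2 2 × GaloisField 2 2, z ≠ 0 ∧ (x, y) * z = 0 := by
      rcases mul_eq_zero.1 hxy with h | h
      · exact ⟨(1, 0), by simp, by simp [h]⟩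
      · exact ⟨(0, 1), by simp, by simp [h]⟩
    obtain ⟨z, hz0, hz⟩ := hz
    refine ⟨⟨e.symm (x, y), ?_, e.symm z, ?_, ?_⟩, by simp⟩
    · simpa using h0
    · simpa using hz0
    · rw [← map_mul, hz, map_zero]
  obtain ⟨p, hp⟩ := mk 1 0 (by simp) (by simp)
  obtain ⟨q, hq⟩ := mk 0 1 (by simp) (by simp)
  obtain ⟨p', hp'⟩ := mk t 0 (by simpa using ht0) (by simp)
  obtain ⟨q', hq'⟩ := mk 0 t (by simpa using ht0) (by simp)
  have einj : ∀ u v : ZDV R, e u = e v → u = v := fun u v h => Subtype.ext (e.injective h)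
  have adj : ∀ u v : ZDV R, (zdGraph R).Adj u v ↔ u ≠ v ∧ e u * e v = 0 := by
    intro u v
    rw [← map_mul, map_eq_zero_iff e e.injective]
    rfl
  have shape : ∀ v : ZDV R, (∃ x, x ≠ 0 ∧ e v = (x, 0)) ∨ (∃ x, x ≠ 0 ∧ e v = (0, x)) := by
    intro v
    obtain ⟨h0, z, hz, hvz⟩ := v.2
    have h0' : e v ≠ 0 := by simpa using h0
    have hz' : e z ≠ 0 := by simpa using hz
    have hm : e v * e z = 0 := by rw [← map_mul, hvz, map_zero]
    rcases hev : e v with ⟨x, y⟩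
    rcases hez : e z with ⟨x', y'⟩
    rw [hev] at h0' hm
    rw [hez] at hz' hm
    simp only [Prod.mk_mul_mk, Prod.mk_eq_zero, mul_eq_zero, ne_eq] at hm h0' hz'
    by_cases hx : x = 0
    · right; exact ⟨y, fun h => h0' ⟨hx, h⟩, by rw [hx]⟩
    · left; refine ⟨x, hx, ?_⟩
      have : y = 0 := by tauto
      rw [this]
  have hpq : p ≠ q := by rintro rfl; rw [hp] at hq; simp at hq
  have hpp' : p' ≠ p := by rintro rfl; rw [hp] at hp'; simp at hp'; exact ht1 hp'.symm
  have hqq' : q' ≠ q := by rintro rfl; rw [hq] at hq'; simp at hq'; exact ht1 hq'.symm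
  have hpq' : p' ≠ q := by rintro rfl; rw [hp'] at hq; simp at hq
  have hqp' : q' ≠ p := by rintro rfl; rw [hq'] at hp; simp at hp
  have hadjA : ∀ v : ZDV R, ∀ x y, x ≠ 0 → y ≠ 0 → ∀ u : ZDV R, e v = (x, 0) → e u = (0, y) → 
      (zdGraph R).Adj v u := by
    intro v x y hx hy u hv hu
    rw [adj, hv, hu]
    refine ⟨?_, by simp⟩
    rintro rfl
    rw [hv] at hu; simp at hu; exact hx hu.1
  let S : Set (ZDV R) := {p, q}
  -- degree into S
  have hdegS : ∀ v, degIn (zdGraph R) S v ≤ 1 := by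
    intro v
    rcases shape v with ⟨x, hx, hv⟩ | ⟨x, hx, hv⟩
    · refine (Set.ncard_le_ncard (t := {q}) ?_ (Set.toFinite _)).trans (by simp)
      rintro u ⟨hu | hu, hadj⟩
      · subst hu
        rw [adj, hv, hp] at hadj
        simp [hx] at hadj
      · exact hu
    · refine (Set.ncard_le_ncard (t := {p}) ?_ (Set.toFinite _)).trans (by simp)
      rintro u ⟨hu | hu, hadj⟩
      · exact hu
      · rw [Set.mem_singleton_iff] at hu
        subst hu
        rw [adj, hv, hq] at hadj
        simp [hx] at hadj
  have hN : ∀ v, degIn (zdGraph R) Set.univ v ≤ 3 := by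
    intro v
    have h3 : (({0} : Set (GaloisField 2 2))ᶜ).ncard = 3 := by
      rw [Set.ncard_compl, h4, Set.ncard_singleton]
    rw [← h3]
    rcases shape v with ⟨x, hx, hv⟩ | ⟨x, hx, hv⟩
    · apply Set.ncard_le_ncard_of_injOn (fun u : ZDV R => (e u).2) _ _ (Set.toFinite _)
      · rintro u ⟨-, hu⟩
        rw [adj, hv] at hu
        rcases shape u with ⟨y, hy, hu'⟩ | ⟨y, hy, hu'⟩
        · rw [hu'] at hu; simp [hx, hy] at hu
        · simpa [hu'] using hy
      · rintro u ⟨-, hu⟩ w ⟨-, hw⟩ huw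
        rw [adj, hv] at hu hw
        apply einj
        refine Prod.ext ?_ huw
        have h1 := congrArg Prod.fst hu.2
        have h2 := congrArg Prod.fst hw.2
        simp [hx] at h1 h2
        rw [h1, h2]
    · apply Set.ncard_le_ncard_of_injOn (fun u : ZDV R => (e u).1) _ _ (Set.toFinite _)
      · rintro u ⟨-, hu⟩
        rw [adj, hv] at hu
        rcases shape u with ⟨y, hy, hu'⟩ | ⟨y, hy, hu'⟩
        · simpa [hu'] using hy
        · rw [hu'] at hu; simp [hx, hy] at hu
      · rintro u ⟨-, hu⟩ w ⟨-, hw⟩ huw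
        rw [adj, hv] at hu hw
        apply einj
        refine Prod.ext huw ?_
        have h1 := congrArg Prod.snd hu.2
        have h2 := congrArg Prod.snd hw.2
        simp [hx] at h1 h2
        rw [h1, h2]
  have hpS : 1 ≤ degIn (zdGraph R) S p := by
    rw [← Set.ncard_singleton q]
    apply Set.ncard_le_ncard _ (Set.toFinite _)
    rintro u rfl
    exact ⟨Or.inr rfl, hadjA p 1 1 one_ne_zero one_ne_zero u hp hq⟩
  have hqS : 1 ≤ degIn (zdGraph R) S q := by
    rw [← Set.ncard_singleton p]
    apply Set.ncard_le_ncard _ (Set.toFinite _)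
    rintro u rfl
    exact ⟨Or.inl rfl, (hadjA u 1 1 one_ne_zero one_ne_zero q hp hq).symm⟩
  have hG1 : IsGlobalDefensiveAlliance (zdGraph R) S := by
    refine ⟨⟨⟨p, Or.inl rfl⟩, ?_⟩, ?_⟩
    · intro v hv
      have h1 := aux_deg_split (zdGraph R) S v
      have h2 := hN v
      have h3 : degIn (zdGraph R) Set.univ v = ((zdGraph R).neighborSet v).ncard := by
        unfold degIn; congr 1; ext u; simp
      have h5 : 1 ≤ degIn (zdGraph R) S v := by
        rcases hv with hv | hv
        · rw [hv]; exact hpS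
        · rw [Set.mem_singleton_iff] at hv; rw [hv]; exact hqS
      omega
    · intro v _
      rcases shape v with ⟨x, hx, hv⟩ | ⟨x, hx, hv⟩
      · exact ⟨q, Or.inr rfl, hadjA v x 1 hx one_ne_zero q hv hq⟩
      · exact ⟨p, Or.inl rfl, (hadjA p 1 x one_ne_zero hx v hp hv).symm⟩
  have hp'S : p' ∈ Sᶜ := by rintro (h | h); exacts [hpp' h, hpq' h]
  have hq'S : q' ∈ Sᶜ := by rintro (h | h); exacts [hqp' h, hqq' h]
  have hG2 : IsGlobalDefensiveAlliance (zdGraph R) Sᶜ := by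
    refine ⟨⟨⟨p', hp'S⟩, ?_⟩, ?_⟩
    · intro v _
      rw [compl_compl]
      have := hdegS v
      omega
    · intro v _
      rcases shape v with ⟨x, hx, hv⟩ | ⟨x, hx, hv⟩
      · exact ⟨q', hq'S, hadjA v x t hx ht0 q' hv hq'⟩
      · exact ⟨p', hp'S, (hadjA p' t x ht0 hx v hp' hv).symm⟩
  have hne : S ≠ Sᶜ := by
    intro h
    have : p' ∈ S := by rw [h]; exact hp'S
    exact hp'S this
  rw [← Finset.card_pair hne]
  apply aux_psi_ge
  refine ⟨?_, ?_, ?_⟩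
  · intro T hT
    rw [Finset.mem_insert, Finset.mem_singleton] at hT
    rcases hT with rfl | rfl
    exacts [hG1, hG2]
  · simp
  · intro A hA B hB hAB
    simp only [Finset.coe_insert, Finset.coe_singleton, Set.mem_insert_iff,
      Set.mem_singleton_iff] at hA hB
    rcases hA with rfl | rfl <;> rcases hB with rfl | rfl
    · exact absurd rfl hAB
    · exact disjoint_compl_right
    · exact disjoint_compl_left
    · exact absurd rfl hAB

theorem stmt18 (R : Type*) [CommRing R] [Finite R] [Nontrivial R]
    (h : gammaA (zdGraph R) = 2) :
    PartitionableGDA (zdGraph R) ↔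
      (psiG (zdGraph R) = 2 ∨
        Nonempty (R ≃+* (GaloisField 2 2 × GaloisField 2 2))) := by
  constructor
  · intro hp
    unfold PartitionableGDA at hp
    by_cases h2 : psiG (zdGraph R) = 2
    · left; exact h2
    · right
      obtain ⟨⟨a⟩, hg⟩ := aux_graph (zdGraph R) h (by omega)
      obtain ⟨b, hab, -, -, hd⟩ := hg a
      refine aux_ring a b ?_ hab hd
      intro v
      obtain ⟨w, hvw, h3, -, hd'⟩ := hg v
      exact aux_card v w hvw h3 hd'
  · rintro (h2 | ⟨⟨e⟩⟩)
    · exact h2.ge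
    · exact aux_conv (by assumption)
end

section
/- Let R be a finite commutative ring with γ_a(Γ(R)) = 2. Then: (1) ψ_g(Γ(R)) = 2 if and only if R is isomorphic to one of the rings ℤ₂ × ℤ₄, ℤ₂ × ℤ₂[X]/(X²), ℤ₃ × ℤ₃, ℤ₃ × 𝔽₄, ℤ₂₅, ℤ₅[X]/(X²); (2) ψ_g(Γ(R)) = 3 if and only if R ≅ 𝔽₄ × 𝔽₄. -/
open Classical

/-- Nonzero zero-divisors. -/
abbrev NZD {R : Type*} [CommRing R] (x : R) : Prop := x ≠ 0 ∧ ∃ y : R, y ≠ 0 ∧ x * y = 0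

/-- Ring-level reformulation of a two-element global defensive alliance. -/
def PairAll (R : Type*) [CommRing R] : Prop :=
  ∃ a b : R, NZD a ∧ NZD b ∧ a ≠ b ∧
    (∀ v : R, NZD v → v = a ∨ v = b ∨ a * v = 0 ∨ b * v = 0) ∧
    Set.ncard {u : R | u ≠ 0 ∧ u ≠ a ∧ u ≠ b ∧ a * u = 0} ≤ (if a * b = 0 then 2 else 1) ∧
    Set.ncard {u : R | u ≠ 0 ∧ u ≠ a ∧ u ≠ b ∧ b * u = 0} ≤ (if a * b = 0 then 2 else 1)

/-- No vertex meets all edges. -/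
def NoStar (R : Type*) [CommRing R] : Prop :=
  ∀ e : R, ∃ v w : R, NZD v ∧ NZD w ∧ v ≠ e ∧ w ≠ e ∧ v * w = 0

/-- A colouring whose colour classes are global defensive alliances. -/
def HasCol (R : Type*) [CommRing R] (k : ℕ) : Prop :=
  ∃ c : R → ℕ, (∀ v, NZD v → c v < k) ∧ (∀ i < k, ∃ v, NZD v ∧ c v = i) ∧
    ∀ v, NZD v →
      (Set.ncard {u : R | u ≠ 0 ∧ u ≠ v ∧ v * u = 0 ∧ c u ≠ c v} ≤
        Set.ncard {u : R | u ≠ 0 ∧ u ≠ v ∧ v * u = 0 ∧ c u = c v} + 1) ∧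
      ∀ i < k, c v ≠ i → ∃ u, u ≠ 0 ∧ u ≠ v ∧ v * u = 0 ∧ c u = i

lemma nzd_of_mul {R : Type*} [CommRing R] {a u : R} (ha : a ≠ 0) (hu : u ≠ 0) (h : a * u = 0) :
    NZD u := ⟨hu, a, ha, by rw [mul_comm]; exact h⟩

lemma degIn_zd {R : Type*} [CommRing R] (S : Set (ZDV R)) (v : ZDV R) (T : Set R)
    (hT : ∀ u : R, u ∈ T ↔ ∃ h : NZD u, (⟨u, h⟩ : ZDV R) ∈ S ∧ u ≠ v ∧ (v : R) * u = 0) :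
    degIn (zdGraph R) S v = T.ncard := by
  unfold degIn
  rw [← Set.ncard_image_of_injective _ (Subtype.val_injective)]
  congr 1
  ext u
  rw [hT]
  constructor
  · rintro ⟨w, ⟨hw, hne, hm⟩, rfl⟩
    exact ⟨w.2, hw, fun h => hne (Subtype.ext h.symm), hm⟩
  · rintro ⟨h, hS, hne, hm⟩
    exact ⟨⟨u, h⟩, ⟨hS, fun h' => hne (by rw [h']), hm⟩, rfl⟩

lemma two_le_ncard {V : Type*} {G : SimpleGraph V} (h : gammaA G = 2) {S : Set V}
    (hS : IsGlobalDefensiveAlliance G S) : 2 ≤ S.ncard := by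
  rw [← h]; exact Nat.sInf_le ⟨S, hS, rfl⟩

lemma part_card {V : Type*} [Finite V] {G : SimpleGraph V} (h : gammaA G = 2) {P : Finset (Set V)}
    (hP : IsGDAPartition G P) : 2 * P.card ≤ Nat.card V := by
  have hfin : ∀ S : Set V, S.Finite := fun S => S.toFinite
  have h1 : (⋃ S ∈ P, S).ncard = ∑ S ∈ P, S.ncard := by
    have := Fintype.ofFinite V
    have h2 : ∀ S : Set V, S.ncard = S.toFinset.card := fun S => Set.ncard_eq_toFinset_card' S
    simp only [h2]
    rw [← Finset.card_biUnion]
    · congr 1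
      ext x; simp
    · intro S hS T hT hne
      refine Set.disjoint_toFinset.2 ?_
      exact hP.2.2 hS hT hne
  have h3 : (⋃ S ∈ P, S) = Set.univ := by
    rw [← hP.2.1, Set.sUnion_eq_biUnion]; simp
  rw [h3, Set.ncard_univ] at h1
  rw [h1, mul_comm, ← smul_eq_mul]
  exact Finset.card_nsmul_le_sum _ _ _ (fun S hS => two_le_ncard h (hP.1 S hS))

lemma psi_bdd {V : Type*} [Finite V] {G : SimpleGraph V} (h : gammaA G = 2) :
    BddAbove {n : ℕ | ∃ P : Finset (Set V), IsGDAPartition G P ∧ P.card = n} := by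
  refine ⟨Nat.card V, ?_⟩
  rintro n ⟨P, hP, rfl⟩
  have := part_card h hP
  omega

lemma psi_le {V : Type*} [Finite V] {G : SimpleGraph V} (h : gammaA G = 2) :
    2 * psiG G ≤ Nat.card V := by
  by_cases hne : {n : ℕ | ∃ P : Finset (Set V), IsGDAPartition G P ∧ P.card = n}.Nonempty
  · obtain ⟨P, hP, hc⟩ := Nat.sSup_mem hne (psi_bdd h)
    have := part_card h hP
    unfold psiG
    omega
  · rw [Set.not_nonempty_iff_eq_empty] at hne
    unfold psiG
    rw [hne]; simp

lemma le_psi {R : Type*} [CommRing R] [Finite R] (h : gammaA (zdGraph R) = 2) {k : ℕ}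
    (hc : HasCol R k) : k ≤ psiG (zdGraph R) := by
  obtain ⟨c, h1, h2, h3⟩ := hc
  apply le_csSup (psi_bdd h)
  let f : ℕ → Set (ZDV R) := fun i => {v | c v = i}
  have hinj : Set.InjOn f (Finset.range k : Set ℕ) := by
    intro i hi j hj hij
    obtain ⟨v, hv, hvi⟩ := h2 i (by simpa using hi)
    have : (⟨v, hv⟩ : ZDV R) ∈ f i := hvi
    rw [hij] at this
    exact hvi.symm.trans this
  refine ⟨(Finset.range k).image f, ⟨?_, ?_, ?_⟩, ?_⟩
  · intro S hS
    obtain ⟨i, hi, rfl⟩ := Finset.mem_image.1 hS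
    rw [Finset.mem_range] at hi
    refine ⟨⟨?_, ?_⟩, ?_⟩
    · obtain ⟨v, hv, hvi⟩ := h2 i hi
      exact ⟨⟨v, hv⟩, hvi⟩
    · intro v hv
      have hv' : c v = i := hv
      rw [degIn_zd (f i)ᶜ v {u : R | u ≠ 0 ∧ u ≠ v ∧ v * u = 0 ∧ c u ≠ c v},
        degIn_zd (f i) v {u : R | u ≠ 0 ∧ u ≠ v ∧ v * u = 0 ∧ c u = c v}]
      · exact (h3 v v.2).1
      · intro u
        constructor
        · rintro ⟨a, b, d, e⟩
          exact ⟨nzd_of_mul v.2.1 a d, e.trans hv', b, d⟩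
        · rintro ⟨a, b, d, e⟩
          exact ⟨a.1, d, e, Eq.trans b hv'.symm⟩
      · intro u
        constructor
        · rintro ⟨a, b, d, e⟩
          exact ⟨nzd_of_mul v.2.1 a d, fun hh => e (Eq.trans hh hv'.symm), b, d⟩
        · rintro ⟨a, b, d, e⟩
          exact ⟨a.1, d, e, fun hh => b (Eq.trans hh hv')⟩
    · intro v hv
      obtain ⟨u, hu0, huv, hm, hcu⟩ := (h3 v v.2).2 i hi hv
      exact ⟨⟨u, nzd_of_mul v.2.1 hu0 hm⟩, hcu, fun hh => huv (by rw [hh]), hm⟩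
  · ext v
    simp only [Finset.coe_image, Set.sUnion_image, Set.mem_iUnion, Set.mem_univ, iff_true]
    exact ⟨c v, by simpa using h1 v v.2, rfl⟩
  · intro S hS T hT hne
    simp only [Finset.coe_image, Set.mem_image] at hS hT
    obtain ⟨i, hi, rfl⟩ := hS
    obtain ⟨j, hj, rfl⟩ := hT
    rw [Set.disjoint_left]
    intro v hv hv'
    apply hne
    have : i = j := Eq.trans (Eq.symm hv) hv'
    rw [this]
  · rw [Finset.card_image_of_injOn hinj, Finset.card_range]

lemma noStar_of {R : Type*} [CommRing R] [Finite R] (h : gammaA (zdGraph R) = 2)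
    (hp : 2 ≤ psiG (zdGraph R)) : NoStar R := by
  have hne : {n : ℕ | ∃ P : Finset (Set (ZDV R)), IsGDAPartition (zdGraph R) P ∧ P.card = n}.Nonempty := by
    by_contra hh
    rw [Set.not_nonempty_iff_eq_empty] at hh
    unfold psiG at hp
    rw [hh] at hp
    simp at hp
  obtain ⟨P, hP, hc⟩ := Nat.sSup_mem hne (psi_bdd h)
  have h2 : 1 < P.card := by rw [hc]; exact hp
  obtain ⟨S, hS, T, hT, hST⟩ := Finset.one_lt_card.1 h2
  have key : ∀ (e : R) (S T : Set (ZDV R)), S ∈ P → T ∈ P → S ≠ T → (∀ x ∈ T, (x : R) ≠ e) →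
      ∃ v w : R, NZD v ∧ NZD w ∧ v ≠ e ∧ w ≠ e ∧ v * w = 0 := by
    intro e S T hS hT hne he
    obtain ⟨x, hx, y, hy, hxy⟩ := (Set.one_lt_ncard (Set.toFinite S)).1 (two_le_ncard h (hP.1 S hS))
    obtain ⟨v, hv, hve⟩ : ∃ v ∈ S, (v : R) ≠ e := by
      by_cases hxe : (x : R) = e
      · exact ⟨y, hy, fun hh => hxy (Subtype.ext (hxe.trans hh.symm))⟩
      · exact ⟨x, hx, hxe⟩
    have hvT : v ∉ T := Set.disjoint_left.1 (hP.2.2 hS hT hne) hv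
    obtain ⟨w, hw, hadj⟩ := (hP.1 T hT).2 v hvT
    exact ⟨v, w, v.2, w.2, hve, he w hw, hadj.2⟩
  intro e
  by_cases heT : ∀ x ∈ T, (x : R) ≠ e
  · exact key e S T hS hT hST heT
  · push Not at heT
    obtain ⟨x, hx, rfl⟩ := heT
    refine key _ T S hT hS hST.symm ?_
    intro y hy hyx
    rw [Subtype.ext hyx] at hy
    exact Set.disjoint_left.1 (hP.2.2 hS hT hST) hy hx

lemma pair_of {R : Type*} [CommRing R] [Finite R] (h : gammaA (zdGraph R) = 2) : PairAll R := by
  have hne : {n : ℕ | ∃ S : Set (ZDV R), IsGlobalDefensiveAlliance (zdGraph R) S ∧ S.ncard = n}.Nonempty := by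
    by_contra hh
    rw [Set.not_nonempty_iff_eq_empty] at hh
    unfold gammaA at h
    rw [hh] at h
    simp at h
  obtain ⟨S, hS, hc⟩ := Nat.sInf_mem hne
  have hc2 : S.ncard = 2 := hc.trans h
  obtain ⟨a, b, hab, rfl⟩ := Set.ncard_eq_two.1 hc2
  have key : ∀ (a b : ZDV R), a ≠ b →
      degIn (zdGraph R) {a, b}ᶜ a ≤ degIn (zdGraph R) {a, b} a + 1 →
      Set.ncard {u : R | u ≠ 0 ∧ u ≠ a ∧ u ≠ b ∧ (a : R) * u = 0} ≤
        (if (a : R) * b = 0 then 2 else 1) := by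
    intro a b hab hd
    rw [degIn_zd {a, b}ᶜ a {u : R | u ≠ 0 ∧ u ≠ a ∧ u ≠ b ∧ (a : R) * u = 0}] at hd
    · refine hd.trans ?_
      split_ifs with h0
      · rw [degIn_zd {a, b} a {(b : R)}]
        · simp
        · intro u
          constructor
          · rintro rfl
            exact ⟨b.2, by simp, fun hh => hab (Subtype.ext hh.symm), h0⟩
          · rintro ⟨h1, h2, h3, h4⟩
            rcases h2 with h2 | h2
            · exact absurd (congrArg Subtype.val h2) h3
            · exact congrArg Subtype.val h2
      · rw [degIn_zd {a, b} a ∅]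
        · simp
        · intro u
          constructor
          · intro hh; exact hh.elim
          · rintro ⟨h1, h2, h3, h4⟩
            rcases h2 with h2 | h2
            · exact absurd (congrArg Subtype.val h2) h3
            · have : u = b := congrArg Subtype.val h2
              rw [this] at h4
              exact h0 h4
    · intro u
      constructor
      · rintro ⟨h1, h2, h3, h4⟩
        refine ⟨nzd_of_mul a.2.1 h1 h4, ?_, h2, h4⟩
        rintro (hh | hh)
        · exact h2 (congrArg Subtype.val hh)
        · exact h3 (congrArg Subtype.val hh)
      · rintro ⟨h1, h2, h3, h4⟩
        refine ⟨h1.1, h3, ?_, h4⟩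
        rintro rfl
        exact h2 (Or.inr rfl)
  refine ⟨a, b, a.2, b.2, fun hh => hab (Subtype.ext hh), ?_, ?_, ?_⟩
  · intro v hv
    by_cases hvS : (⟨v, hv⟩ : ZDV R) ∈ ({a, b} : Set (ZDV R))
    · rcases hvS with hh | hh
      · exact Or.inl (congrArg Subtype.val hh)
      · exact Or.inr (Or.inl (congrArg Subtype.val hh))
    · obtain ⟨u, hu, hadj⟩ := hS.2 _ hvS
      have hm : v * (u : R) = 0 := hadj.2
      rw [mul_comm] at hm
      rcases hu with rfl | rfl
      · exact Or.inr (Or.inr (Or.inl hm))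
      · exact Or.inr (Or.inr (Or.inr hm))
  · exact key a b hab (hS.1.2 a (by simp))
  · have := key b a hab.symm (by rw [Set.pair_comm]; exact hS.1.2 b (by simp))
    rw [mul_comm (b : R)] at this
    convert this using 4
    tauto

lemma card_le_six {R : Type*} [CommRing R] [Finite R] (h : PairAll R) :
    Set.ncard {v : R | NZD v} ≤ 6 := by
  obtain ⟨a, b, ha, hb, hab, hd, h1, h2⟩ := h
  have hsub : {v : R | NZD v} ⊆ ({a, b} ∪ {u : R | u ≠ 0 ∧ u ≠ a ∧ u ≠ b ∧ a * u = 0}) ∪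
      {u : R | u ≠ 0 ∧ u ≠ a ∧ u ≠ b ∧ b * u = 0} := by
    intro v hv
    have hv0 := hv.1
    have := hd v hv
    simp only [Set.mem_union, Set.mem_insert_iff, Set.mem_singleton_iff, Set.mem_ofPred_eq]
    tauto
  have h3 := Set.ncard_le_ncard hsub (Set.toFinite _)
  have h4 := Set.ncard_union_le ({a, b} ∪ {u : R | u ≠ 0 ∧ u ≠ a ∧ u ≠ b ∧ a * u = 0})
      {u : R | u ≠ 0 ∧ u ≠ a ∧ u ≠ b ∧ b * u = 0}
  have h5 := Set.ncard_union_le {a, b} {u : R | u ≠ 0 ∧ u ≠ a ∧ u ≠ b ∧ a * u = 0}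
  have h6 := Set.ncard_pair hab
  split_ifs at h1 h2 <;> omega

lemma nzd_equiv {R S : Type*} [CommRing R] [CommRing S] (e : R ≃+* S) {x : R} :
    NZD (e x) ↔ NZD x := by
  constructor
  · rintro ⟨h1, y, h2, h3⟩
    refine ⟨fun h => h1 (by simp [h]), e.symm y, by simpa using h2, ?_⟩
    apply e.injective
    simpa using h3
  · rintro ⟨h1, y, h2, h3⟩
    refine ⟨by simpa using h1, e y, by simpa using h2, ?_⟩
    rw [← map_mul, h3, map_zero]

lemma ncard_equiv {R S : Type*} (e : R ≃ S) (A : Set R) (B : Set S)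
    (h : ∀ x, e x ∈ B ↔ x ∈ A) : B.ncard = A.ncard := by
  rw [← Set.ncard_image_of_injective A e.injective]
  congr 1
  ext y
  obtain ⟨x, rfl⟩ := e.surjective y
  simp [h]

lemma PairAll.equiv {R S : Type*} [CommRing R] [CommRing S] (e : R ≃+* S) (h : PairAll R) :
    PairAll S := by
  obtain ⟨a, b, ha, hb, hab, hd, h1, h2⟩ := h
  have hm : ∀ x y : R, e x * e y = 0 ↔ x * y = 0 := by
    intro x y; rw [← map_mul, map_eq_zero_iff e e.injective]
  refine ⟨e a, e b, (nzd_equiv e).2 ha, (nzd_equiv e).2 hb, by simpa using hab, ?_, ?_, ?_⟩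
  · intro v
    obtain ⟨v, rfl⟩ := e.surjective v
    rw [nzd_equiv e, hm, hm, e.injective.eq_iff, e.injective.eq_iff]
    exact hd v
  · rw [ncard_equiv e.toEquiv {u : R | u ≠ 0 ∧ u ≠ a ∧ u ≠ b ∧ a * u = 0}]
    · simpa only [hm] using h1
    · intro x
      simp [hm]
  · rw [ncard_equiv e.toEquiv {u : R | u ≠ 0 ∧ u ≠ a ∧ u ≠ b ∧ b * u = 0}]
    · simpa only [hm] using h2
    · intro x
      simp [hm]

lemma NoStar.equiv {R S : Type*} [CommRing R] [CommRing S] (e : R ≃+* S) (h : NoStar R) :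
    NoStar S := by
  intro x
  obtain ⟨v, w, hv, hw, h1, h2, h3⟩ := h (e.symm x)
  refine ⟨e v, e w, (nzd_equiv e).2 hv, (nzd_equiv e).2 hw, ?_, ?_, ?_⟩
  · rintro rfl; simp at h1
  · rintro rfl; simp at h2
  · rw [← map_mul, h3, map_zero]

lemma HasCol.equiv {R S : Type*} [CommRing R] [CommRing S] (e : R ≃+* S) {k : ℕ}
    (h : HasCol S k) : HasCol R k := by
  obtain ⟨c, h1, h2, h3⟩ := h
  have hm : ∀ x y : R, e x * e y = 0 ↔ x * y = 0 := by
    intro x y; rw [← map_mul, map_eq_zero_iff e e.injective]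
  refine ⟨fun x => c (e x), ?_, ?_, ?_⟩
  · intro v hv; exact h1 _ ((nzd_equiv e).2 hv)
  · intro i hi
    obtain ⟨v, hv, hc⟩ := h2 i hi
    obtain ⟨v, rfl⟩ := e.surjective v
    exact ⟨v, (nzd_equiv e).1 hv, hc⟩
  · intro v hv
    obtain ⟨h4, h5⟩ := h3 (e v) ((nzd_equiv e).2 hv)
    constructor
    · rw [ncard_equiv e.toEquiv {u : R | u ≠ 0 ∧ u ≠ v ∧ v * u = 0 ∧ c (e u) ≠ c (e v)},
        ncard_equiv e.toEquiv {u : R | u ≠ 0 ∧ u ≠ v ∧ v * u = 0 ∧ c (e u) = c (e v)}] at h4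
      · exact h4
      · intro x; simp [hm]
      · intro x; simp [hm]
    · intro i hi hne
      obtain ⟨u, hu0, huv, hmu, hcu⟩ := h5 i hi hne
      obtain ⟨u, rfl⟩ := e.surjective u
      exact ⟨u, by simpa using hu0, fun hh => huv (by rw [hh]), (hm _ _).1 hmu, hcu⟩

/-- Finite, decidable version of the colouring conditions. -/
def ColDec {R : Type*} [CommRing R] [Fintype R] [DecidableEq R] (k : ℕ) (c : R → ℕ) : Prop :=
  (∀ v : R, NZD v → c v < k) ∧ (∀ i : Fin k, ∃ v : R, NZD v ∧ c v = i) ∧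
      ∀ v : R, NZD v →
        ((Finset.univ.filter (fun u : R => u ≠ 0 ∧ u ≠ v ∧ v * u = 0 ∧ c u ≠ c v)).card ≤
          (Finset.univ.filter (fun u : R => u ≠ 0 ∧ u ≠ v ∧ v * u = 0 ∧ c u = c v)).card + 1) ∧
        ∀ i : Fin k, c v ≠ i → ∃ u : R, u ≠ 0 ∧ u ≠ v ∧ v * u = 0 ∧ c u = i

/-- Finite, decidable version of `PairAll`. -/
def PairDec (R : Type*) [CommRing R] [Fintype R] [DecidableEq R] : Prop :=
    ∃ a b : R, NZD a ∧ NZD b ∧ a ≠ b ∧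
    (∀ v : R, NZD v → v = a ∨ v = b ∨ a * v = 0 ∨ b * v = 0) ∧
    (Finset.univ.filter (fun u : R => u ≠ 0 ∧ u ≠ a ∧ u ≠ b ∧ a * u = 0)).card ≤ 2 ∧
    (Finset.univ.filter (fun u : R => u ≠ 0 ∧ u ≠ a ∧ u ≠ b ∧ b * u = 0)).card ≤ 2

instance decColDec {R : Type*} [CommRing R] [Fintype R] [DecidableEq R] (k : ℕ) (c : R → ℕ) :
    Decidable (ColDec k c) := by
  unfold ColDec NZD
  infer_instance

instance decPairDec (R : Type*) [CommRing R] [Fintype R] [DecidableEq R] :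
    Decidable (PairDec R) := by
  unfold PairDec NZD
  infer_instance

lemma hasCol_of_dec {R : Type*} [CommRing R] [Fintype R] [DecidableEq R] (k : ℕ) (c : R → ℕ)
    (h : ColDec k c) : HasCol R k := by
  refine ⟨c, h.1, fun i hi => h.2.1 ⟨i, hi⟩, ?_⟩
  intro v hv
  refine ⟨?_, fun i hi => (h.2.2 v hv).2 ⟨i, hi⟩⟩
  convert (h.2.2 v hv).1 using 2
  · rw [← Set.ncard_coe_finset]; congr 1; ext; simp
  · rw [← Set.ncard_coe_finset]; congr 1; ext; simp

lemma ncard_of_dec {R : Type*} [CommRing R] [Fintype R] [DecidableEq R] {n : ℕ}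
    (h : (Finset.univ.filter (fun u : R => NZD u)).card = n) : Set.ncard {v : R | NZD v} = n := by
  rw [← h, ← Set.ncard_coe_finset]; congr 1; ext; simp

lemma pair_dec {R : Type*} [CommRing R] [Fintype R] [DecidableEq R] (h : PairAll R) :
    PairDec R := by
  obtain ⟨a, b, ha, hb, hab, hd, h1, h2⟩ := h
  refine ⟨a, b, ha, hb, hab, hd, ?_, ?_⟩
  · rw [← Set.ncard_coe_finset]
    refine le_trans (le_of_eq ?_) (h1.trans (by split_ifs <;> omega))
    congr 1; ext; simp
  · rw [← Set.ncard_coe_finset]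
    refine le_trans (le_of_eq ?_) (h2.trans (by split_ifs <;> omega))
    congr 1; ext; simp

instance qaFintype (n : ℕ) [NeZero n] (a b : ZMod n) : Fintype (QuadraticAlgebra (ZMod n) a b) :=
  Fintype.ofEquiv _ (QuadraticAlgebra.equivProd a b).symm

/-- A computable model of the field with four elements. -/
abbrev QF4 := QuadraticAlgebra (ZMod 2) 1 1
/-- A computable model of the dual numbers. -/
abbrev QD (n : ℕ) := QuadraticAlgebra (ZMod n) 0 0

set_option maxRecDepth 100000

lemma col1 : HasCol (ZMod 2 × ZMod 4) 2 ∧ Set.ncard {v : ZMod 2 × ZMod 4 | NZD v} = 5 :=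
  ⟨hasCol_of_dec 2 (fun x => if x = (1, 0) ∨ x = (0, 2) then 1 else 0) (by decide +kernel),
    ncard_of_dec (by decide +kernel)⟩

lemma col2 : HasCol (ZMod 2 × QD 2) 2 ∧ Set.ncard {v : ZMod 2 × QD 2 | NZD v} = 5 :=
  ⟨hasCol_of_dec 2 (fun x => if x = (1, 0) ∨ x = (0, ⟨0, 1⟩) then 1 else 0) (by decide +kernel),
    ncard_of_dec (by decide +kernel)⟩

lemma col3 : HasCol (ZMod 3 × ZMod 3) 2 ∧ Set.ncard {v : ZMod 3 × ZMod 3 | NZD v} = 4 :=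
  ⟨hasCol_of_dec 2 (fun x => if x = (1, 0) ∨ x = (0, 1) then 1 else 0) (by decide +kernel),
    ncard_of_dec (by decide +kernel)⟩

lemma col4 : HasCol (ZMod 3 × QF4) 2 ∧ Set.ncard {v : ZMod 3 × QF4 | NZD v} = 5 :=
  ⟨hasCol_of_dec 2 (fun x => if x = (1, 0) ∨ x = (0, 1) then 1 else 0) (by decide +kernel),
    ncard_of_dec (by decide +kernel)⟩

lemma col5 : HasCol (ZMod 25) 2 ∧ Set.ncard {v : ZMod 25 | NZD v} = 4 :=
  ⟨hasCol_of_dec 2 (fun x => if x = 5 ∨ x = 10 then 1 else 0) (by decide +kernel),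
    ncard_of_dec (by decide +kernel)⟩

lemma col6 : HasCol (QD 5) 2 ∧ Set.ncard {v : QD 5 | NZD v} = 4 :=
  ⟨hasCol_of_dec 2 (fun x => if x = ⟨0, 1⟩ ∨ x = ⟨0, 2⟩ then 1 else 0) (by decide +kernel),
    ncard_of_dec (by decide +kernel)⟩

lemma col7 : HasCol (QF4 × QF4) 3 ∧ Set.ncard {v : QF4 × QF4 | NZD v} = 6 :=
  ⟨hasCol_of_dec 3 (fun x => if x.1 + x.2 = ⟨1, 0⟩ then 0 else if x.1 + x.2 = ⟨0, 1⟩ then 1 else 2)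
    (by decide +kernel), ncard_of_dec (by decide +kernel)⟩

lemma no_pair_15 : ¬ PairAll (ZMod 3 × ZMod 5) := fun h => absurd (pair_dec h) (by decide +kernel)

lemma no_pair_8 : ¬ PairAll (ZMod 2 × ZMod 2 × ZMod 2) :=
  fun h => absurd (pair_dec h) (by decide +kernel)

lemma qf4_field : IsField QF4 where
  exists_pair_ne := ⟨0, 1, by decide +kernel⟩
  mul_comm := mul_comm
  mul_inv_cancel := by decide +kernel

lemma gf4_card : Nat.card (GaloisField 2 2) = 4 := GaloisField.card 2 2 (by norm_num)

lemma field4_equiv {A B : Type*} [CommRing A] [CommRing B] (hA : IsField A) (hB : IsField B)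
    (h1 : Nat.card A = 4) (h2 : Nat.card B = 4) : Nonempty (A ≃+* B) := by
  let := hA.toField
  let := hB.toField
  have : Finite A := Nat.finite_of_card_ne_zero (by omega)
  have : Finite B := Nat.finite_of_card_ne_zero (by omega)
  have := Fintype.ofFinite A
  have := Fintype.ofFinite B
  have h3 : Fintype.card A = Fintype.card B := by
    rw [← Nat.card_eq_fintype_card, ← Nat.card_eq_fintype_card, h1, h2]
  exact ⟨FiniteField.ringEquivOfCardEq h3⟩

lemma qf4_card : Nat.card QF4 = 4 := by rw [Nat.card_eq_fintype_card]; decide +kernel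

lemma gf4_equiv : Nonempty (GaloisField 2 2 ≃+* QF4) :=
  field4_equiv (Field.toIsField _) qf4_field gf4_card qf4_card

/-- Recognising `ℤ_p[X]/(X²)`. -/
lemma dual_equiv {C : Type*} [CommRing C] (p : ℕ) [Fact p.Prime] [CharP C p]
    (hcard : Nat.card C = p ^ 2) (x : C) (hx : x ≠ 0) (hxx : x * x = 0) :
    Nonempty (C ≃+* (Polynomial (ZMod p) ⧸
          Ideal.span {(Polynomial.X : Polynomial (ZMod p)) ^ 2})) := by
  have hp : p.Prime := Fact.out
  let _ : Algebra (ZMod p) C := ZMod.algebra C p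
  have : Finite C := Nat.finite_of_card_ne_zero (by rw [hcard]; exact pow_ne_zero _ hp.ne_zero)
  have : Nontrivial C := ⟨x, 0, hx⟩
  let i := algebraMap (ZMod p) C
  have hker : ∀ a b : ZMod p, i a + i b * x = 0 → a = 0 ∧ b = 0 := by
    intro a b h
    have h1 : i a * x = 0 := by
      have : (i a + i b * x) * x = 0 := by rw [h, zero_mul]
      rw [add_mul, mul_assoc, hxx, mul_zero, add_zero] at this
      exact this
    have key : ∀ c : ZMod p, i c * x = 0 → c = 0 := by
      intro c hc
      by_contra h0
      apply hx
      have : i c⁻¹ * (i c * x) = 0 := by rw [hc, mul_zero]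
      rwa [← mul_assoc, ← map_mul, inv_mul_cancel₀ h0, map_one, one_mul] at this
    have ha := key a h1
    refine ⟨ha, key b ?_⟩
    rwa [ha, map_zero, zero_add] at h
  have hinj : Function.Injective (fun q : ZMod p × ZMod p => i q.1 + i q.2 * x) := by
    rintro ⟨a, b⟩ ⟨c, d⟩ h
    have h' : i a + i b * x = i c + i d * x := h
    have h2 : i (a - c) + i (b - d) * x = 0 := by
      rw [map_sub, map_sub]; linear_combination h'
    obtain ⟨h3, h4⟩ := hker _ _ h2
    rw [sub_eq_zero] at h3 h4
    rw [h3, h4]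
  have hbij : Function.Bijective (fun q : ZMod p × ZMod p => i q.1 + i q.2 * x) := by
    rw [Nat.bijective_iff_injective_and_card]
    refine ⟨hinj, ?_⟩
    rw [Nat.card_prod, Nat.card_zmod, hcard, sq]
  let f : Polynomial (ZMod p) →+* C := (Polynomial.aeval x : Polynomial (ZMod p) →ₐ[ZMod p] C)
  have hfC : ∀ a, f (Polynomial.C a) = i a := fun a => by simp [f, i]
  have hfX : f Polynomial.X = x := by simp [f]
  have hsurj : Function.Surjective f := by
    intro y
    obtain ⟨⟨a, b⟩, rfl⟩ := hbij.2 y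
    refine ⟨Polynomial.C a + Polynomial.C b * Polynomial.X, ?_⟩
    rw [map_add, map_mul, hfC, hfC, hfX]
  have hk : RingHom.ker f = Ideal.span {(Polynomial.X : Polynomial (ZMod p)) ^ 2} := by
    apply le_antisymm
    · intro g hg
      rw [RingHom.mem_ker] at hg
      rw [Ideal.mem_span_singleton, Polynomial.X_pow_dvd_iff]
      have hd : g = Polynomial.X ^ 2 * g.divX.divX + Polynomial.C (g.coeff 1) * Polynomial.X
          + Polynomial.C (g.coeff 0) := by
        have h1 := Polynomial.divX_mul_X_add g
        have h2 := Polynomial.divX_mul_X_add g.divX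
        rw [Polynomial.coeff_divX] at h2
        linear_combination (-h1) - Polynomial.X * h2
      have h0 : i (g.coeff 0) + i (g.coeff 1) * x = 0 := by
        rw [hd, map_add, map_add, map_mul, map_mul, map_pow, hfX, sq, hxx, zero_mul, zero_add,
          hfC, hfC, add_comm] at hg
        exact hg
      obtain ⟨h1, h2⟩ := hker _ _ h0
      intro d hd
      interval_cases d
      · exact h1
      · exact h2
    · rw [Ideal.span_singleton_le_iff_mem, RingHom.mem_ker, map_pow, hfX, sq, hxx]
  exact ⟨((Ideal.quotEquivOfEq hk.symm).trans (RingHom.quotientKerEquivOfSurjective hsurj)).symm⟩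

lemma qd_equiv (p : ℕ) [Fact p.Prime] : Nonempty (QD p ≃+* (Polynomial (ZMod p) ⧸
          Ideal.span {(Polynomial.X : Polynomial (ZMod p)) ^ 2})) := by
  have hp : p.Prime := Fact.out
  have hc : Nat.card (QD p) = p ^ 2 := by
    rw [Nat.card_congr (QuadraticAlgebra.equivProd (0 : ZMod p) 0), Nat.card_prod, Nat.card_zmod, sq]
  have : CharP (QD p) p := by
    rw [CharP.charP_iff_prime_eq_zero hp]
    ext <;> simp
  refine dual_equiv p hc ⟨0, 1⟩ ?_ ?_
  · intro h
    have := congrArg QuadraticAlgebra.im h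
    simp at this
  · ext <;> simp

/-- The seven rings of the classification. -/
def Lst (R : Type*) [CommRing R] : Prop :=
  (Nonempty (R ≃+* (ZMod 2 × ZMod 4)) ∨
        Nonempty (R ≃+* (ZMod 2 × (Polynomial (ZMod 2) ⧸
          Ideal.span {(Polynomial.X : Polynomial (ZMod 2)) ^ 2}))) ∨
        Nonempty (R ≃+* (ZMod 3 × ZMod 3)) ∨
        Nonempty (R ≃+* (ZMod 3 × GaloisField 2 2)) ∨
        Nonempty (R ≃+* ZMod 25) ∨
        Nonempty (R ≃+* (Polynomial (ZMod 5) ⧸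
          Ideal.span {(Polynomial.X : Polynomial (ZMod 5)) ^ 2}))) ∨
      Nonempty (R ≃+* (GaloisField 2 2 × GaloisField 2 2))

lemma Lst.equiv {R S : Type*} [CommRing R] [CommRing S] (e : R ≃+* S) (h : Lst S) : Lst R := by
  rcases h with (⟨⟨f⟩⟩ | ⟨⟨f⟩⟩ | ⟨⟨f⟩⟩ | ⟨⟨f⟩⟩ | ⟨⟨f⟩⟩ | ⟨⟨f⟩⟩) | ⟨⟨f⟩⟩
  · exact Or.inl (Or.inl ⟨e.trans f⟩)
  · exact Or.inl (Or.inr (Or.inl ⟨e.trans f⟩))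
  · exact Or.inl (Or.inr (Or.inr (Or.inl ⟨e.trans f⟩)))
  · exact Or.inl (Or.inr (Or.inr (Or.inr (Or.inl ⟨e.trans f⟩))))
  · exact Or.inl (Or.inr (Or.inr (Or.inr (Or.inr (Or.inl ⟨e.trans f⟩)))))
  · exact Or.inl (Or.inr (Or.inr (Or.inr (Or.inr (Or.inr ⟨e.trans f⟩)))))
  · exact Or.inr ⟨e.trans f⟩

lemma not_nzd_unit {R : Type*} [CommRing R] {x : R} (h : IsUnit x) : ¬ NZD x := by
  rintro ⟨_, y, hy, hxy⟩
  exact hy ((IsUnit.mul_right_eq_zero h).1 hxy)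

lemma dichotomy (R : Type*) [CommRing R] [Finite R] :
    (∀ x : R, IsUnit x ∨ IsNilpotent x) ∨ ∃ e : R, e * e = e ∧ e ≠ 0 ∧ e ≠ 1 := by
  by_contra hcon
  push Not at hcon
  obtain ⟨⟨x, hu, hn⟩, he⟩ := hcon
  obtain ⟨i, j, hij, hx⟩ : ∃ i j : ℕ, i < j ∧ x ^ i = x ^ j := by
    obtain ⟨i, j, hne, h⟩ := Finite.exists_ne_map_eq_of_infinite (fun n : ℕ => x ^ n)
    rcases lt_or_gt_of_ne hne with h' | h'
    · exact ⟨i, j, h', h⟩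
    · exact ⟨j, i, h', h.symm⟩
  obtain ⟨d, rfl⟩ := Nat.exists_eq_add_of_lt hij
  have hstep : ∀ m, i ≤ m → ∀ k, x ^ (m + (d + 1) * k) = x ^ m := by
    intro m hm k
    induction k with
    | zero => simp
    | succ k ih =>
      obtain ⟨t, rfl⟩ := Nat.exists_eq_add_of_le hm
      have : i + t + (d + 1) * (k + 1) = (i + d + 1) + (t + (d + 1) * k) := by ring
      rw [this, pow_add, ← hx, ← pow_add, ← add_assoc, ih]
  have hidem : x ^ ((d + 1) * i) * x ^ ((d + 1) * i) = x ^ ((d + 1) * i) := by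
    rw [← pow_add]
    exact hstep _ (Nat.le_mul_of_pos_left _ (Nat.succ_pos d)) i
  have h0 : x ^ ((d + 1) * i) ≠ 0 := fun h => hn ⟨_, h⟩
  have h1 := he _ hidem h0
  rcases Nat.eq_zero_or_pos i with rfl | hi
  · apply hu
    have : x ^ (d + 1) = 1 := by simpa using hx.symm
    exact IsUnit.of_pow_eq_one this (Nat.succ_ne_zero d)
  · apply hu
    exact IsUnit.of_pow_eq_one h1 (by positivity)

lemma split_prod.{u} (R : Type u) [CommRing R] [Finite R] (e : R) (h : e * e = e) (h0 : e ≠ 0)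
    (h1 : e ≠ 1) : ∃ (A B : Type u) (_ : CommRing A) (_ : CommRing B) (_ : Finite A) (_ : Finite B)
      (_ : Nontrivial A) (_ : Nontrivial B), Nonempty (R ≃+* A × B) := by
  have hco : IsCoprime (Ideal.span {e}) (Ideal.span {1 - e}) := by
    rw [Ideal.isCoprime_span_singleton_iff]
    exact ⟨1, 1, by ring⟩
  have hbot : Ideal.span {e} * Ideal.span {1 - e} = ⊥ := by
    rw [Ideal.span_singleton_mul_span_singleton, mul_sub, h, mul_one, sub_self]
    simp
  refine ⟨R ⧸ Ideal.span {e}, R ⧸ Ideal.span {1 - e}, inferInstance, inferInstance,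
    Finite.of_surjective _ Ideal.Quotient.mk_surjective,
    Finite.of_surjective _ Ideal.Quotient.mk_surjective, ?_, ?_, ⟨?_⟩⟩
  · rw [Ideal.Quotient.nontrivial_iff, Ne, Ideal.span_singleton_eq_top]
    intro hu
    apply h1
    exact hu.mul_left_cancel (by rw [h, mul_one])
  · rw [Ideal.Quotient.nontrivial_iff, Ne, Ideal.span_singleton_eq_top]
    intro hu
    apply h0
    have : (1 - e) * e = 0 := by rw [sub_mul, h, one_mul, sub_self]
    exact (IsUnit.mul_right_eq_zero hu).1 this
  · exact (RingEquiv.quotientBot R).symm.trans ((Ideal.quotEquivOfEq hbot.symm).trans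
      (Ideal.quotientMulEquivQuotientProd _ _ hco))

lemma equiv_zmod_prime {A : Type*} [CommRing A] {p : ℕ} (hp : p.Prime) (h : Nat.card A = p) :
    Nonempty (A ≃+* ZMod p) := by
  have : Finite A := Nat.finite_of_card_ne_zero (by rw [h]; exact hp.ne_zero)
  have := Fintype.ofFinite A
  exact ⟨(ZMod.ringEquivOfPrime A hp (by rw [← Nat.card_eq_fintype_card, h])).symm⟩

lemma equiv_zmod_char {A : Type*} [CommRing A] {n : ℕ} [CharP A n] (hn : n ≠ 0)
    (h : Nat.card A = n) : Nonempty (A ≃+* ZMod n) := by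
  have : Finite A := Nat.finite_of_card_ne_zero (by rw [h]; exact hn)
  have := Fintype.ofFinite A
  exact ⟨(ZMod.ringEquiv A (by rw [← Nat.card_eq_fintype_card, h])).symm⟩

lemma ringChar_dvd_card (A : Type*) [CommRing A] [Finite A] : ringChar A ∣ Nat.card A := by
  have := Fintype.ofFinite A
  rw [← CharP.cast_eq_zero_iff A, Nat.card_eq_fintype_card, Nat.cast_card_eq_zero]

lemma sq_zero_of_nilp {A : Type*} [CommRing A] {x : A} (hx : x ≠ 0) (hn : IsNilpotent x) :
    ∃ w : A, w ≠ 0 ∧ w * w = 0 ∧ x ∣ w := by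
  obtain ⟨k, hk, hlow⟩ : ∃ k, x ^ k = 0 ∧ ∀ m < k, x ^ m ≠ 0 :=
    ⟨Nat.find hn, Nat.find_spec hn, fun m hm => Nat.find_min hn hm⟩
  match k, hk, hlow with
  | 0, hk, hlow =>
    exfalso; apply hx
    rw [pow_zero] at hk
    rw [← mul_one x, hk, mul_zero]
  | 1, hk, hlow => exact absurd (by simpa using hk) hx
  | k + 2, hk, hlow =>
    refine ⟨x ^ (k + 1), hlow _ (by omega), ?_, dvd_pow_self _ (Nat.succ_ne_zero k)⟩
    rw [← pow_add, show k + 1 + (k + 1) = (k + 2) + k by ring, pow_add, hk, zero_mul]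

lemma isField_of_no_nzd {A : Type*} [CommRing A] [Finite A] [Nontrivial A] (h : ∀ x : A, ¬ NZD x) :
    IsField A := by
  have : NoZeroDivisors A := ⟨fun {a b} hab => by
    by_contra hc
    push Not at hc
    exact h a ⟨hc.1, b, hc.2, hab⟩⟩
  have : IsDomain A := NoZeroDivisors.to_isDomain A
  exact Finite.isField_of_domain A

lemma no_nzd_of_prime {A : Type*} [CommRing A] {p : ℕ} (hp : p.Prime) (h : Nat.card A = p) (x : A) :
    ¬ NZD x := by
  obtain ⟨e⟩ := equiv_zmod_prime hp h
  have : Fact p.Prime := ⟨hp⟩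
  rw [← nzd_equiv e]
  rintro ⟨h1, y, hy, hxy⟩
  rcases mul_eq_zero.1 hxy with h | h
  · exact h1 h
  · exact hy h

lemma ring4 {B : Type*} [CommRing B] [Finite B] [Nontrivial B] (hc : Nat.card B = 4) {x : B}
    (hx : NZD x) : Nonempty (B ≃+* ZMod 4) ∨ Nonempty (B ≃+* (Polynomial (ZMod 2) ⧸
          Ideal.span {(Polynomial.X : Polynomial (ZMod 2)) ^ 2})) ∨
      Nonempty (B ≃+* ZMod 2 × ZMod 2) := by
  rcases dichotomy B with hd | ⟨e, he, he0, he1⟩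
  · have hn : IsNilpotent x := (hd x).resolve_left (fun hu => not_nzd_unit hu hx)
    obtain ⟨w, hw, hww, _⟩ := sq_zero_of_nilp hx.1 hn
    have hdvd := ringChar_dvd_card B
    rw [hc] at hdvd
    have hne := CharP.ringChar_ne_one (R := B)
    have hle := Nat.le_of_dvd (by norm_num) hdvd
    have hch : CharP B (ringChar B) := inferInstance
    obtain h | h : ringChar B = 2 ∨ ringChar B = 4 := by
      interval_cases h : ringChar B <;> omega
    · rw [h] at hch
      have : Fact (Nat.Prime 2) := ⟨Nat.prime_two⟩
      exact Or.inr (Or.inl (dual_equiv 2 (by rw [hc]; norm_num) w hw hww))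
    · rw [h] at hch
      exact Or.inl (equiv_zmod_char (by norm_num) hc)
  · obtain ⟨A, C, _, _, _, _, _, _, ⟨f⟩⟩ := split_prod B e he he0 he1
    have h1 : Nat.card A * Nat.card C = 4 := by
      rw [← Nat.card_prod, ← Nat.card_congr f.toEquiv, hc]
    have hA : 1 < Nat.card A := Finite.one_lt_card
    have hC : 1 < Nat.card C := Finite.one_lt_card
    have hA2 : Nat.card A = 2 := by nlinarith
    have hC2 : Nat.card C = 2 := by nlinarith
    obtain ⟨g1⟩ := equiv_zmod_prime Nat.prime_two hA2
    obtain ⟨g2⟩ := equiv_zmod_prime Nat.prime_two hC2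
    exact Or.inr (Or.inr ⟨f.trans (RingEquiv.prodCongr g1 g2)⟩)

lemma prod_count (A B : Type*) [CommRing A] [CommRing B] [Finite A] [Finite B] [Nontrivial A]
    [Nontrivial B] : (Nat.card A - 1) + (Nat.card B - 1) +
      (Nat.card A - 1) * Set.ncard {x : B | NZD x} ≤ Set.ncard {v : A × B | NZD v} := by
  have hcA : ({0}ᶜ : Set A).ncard = Nat.card A - 1 := by
    rw [Set.ncard_compl, Set.ncard_singleton]
  have hcB : ({0}ᶜ : Set B).ncard = Nat.card B - 1 := by
    rw [Set.ncard_compl, Set.ncard_singleton]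
  have h1 : (({0}ᶜ : Set A) ×ˢ ({0} : Set B)).ncard = Nat.card A - 1 := by
    rw [Set.ncard_prod, hcA, Set.ncard_singleton, mul_one]
  have h2 : (({0} : Set A) ×ˢ ({0}ᶜ : Set B)).ncard = Nat.card B - 1 := by
    rw [Set.ncard_prod, hcB, Set.ncard_singleton, one_mul]
  have h3 : (({0}ᶜ : Set A) ×ˢ {x : B | NZD x}).ncard =
      (Nat.card A - 1) * Set.ncard {x : B | NZD x} := by
    rw [Set.ncard_prod, hcA]
  rw [← h3]
  conv_lhs => enter [1]; rw [← h1, ← h2]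
  rw [← Set.ncard_union_eq, ← Set.ncard_union_eq]
  · apply Set.ncard_le_ncard _ (Set.toFinite _)
    rintro ⟨x, y⟩ ((⟨hx, hy⟩ | ⟨hx, hy⟩) | ⟨hx, hy⟩)
    · simp only [Set.mem_compl_iff, Set.mem_singleton_iff] at hx hy
      subst hy
      exact ⟨by simpa using hx, (0, 1), by simp, by simp⟩
    · simp only [Set.mem_compl_iff, Set.mem_singleton_iff] at hx hy
      subst hx
      exact ⟨by simpa using hy, (1, 0), by simp, by simp⟩
    · simp only [Set.mem_compl_iff, Set.mem_singleton_iff] at hx hy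
      obtain ⟨hy0, z, hz, hyz⟩ := hy
      exact ⟨by simp [hx], (0, z), by simpa using hz, by simpa using hyz⟩
  · rw [Set.disjoint_left]
    rintro ⟨x, y⟩ (⟨hx, hy⟩ | ⟨hx, hy⟩) ⟨hx', hy'⟩
    · exact hy'.1 hy
    · exact hx' hx
  · rw [Set.disjoint_left]
    rintro ⟨x, y⟩ ⟨hx, hy⟩ ⟨hx', hy'⟩
    exact hy' hy

lemma prod_list (A B : Type*) [CommRing A] [CommRing B] [Finite A] [Finite B] [Nontrivial A]
    [Nontrivial B] (hp : PairAll (A × B)) (hs : NoStar (A × B)) (hle : Nat.card A ≤ Nat.card B) :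
    Lst (A × B) := by
  have hA : 1 < Nat.card A := Finite.one_lt_card
  have hc1 := (prod_count A B).trans (card_le_six hp)
  have hc2 := (prod_count B A).trans
    (card_le_six (hp.equiv (RingEquiv.prodComm (R := A) (S := B))))
  have hfield : ∀ (C : Type _) [CommRing C] [Finite C] [Nontrivial C],
      Set.ncard {x : C | NZD x} = 0 → ∀ x : C, ¬ NZD x := by
    intro C _ _ _ h x hx
    rw [Set.ncard_eq_zero] at h
    have : x ∈ {x : C | NZD x} := hx
    rw [h] at this
    exact this
  have hA4 : Nat.card A ≤ 4 := by omega
  obtain ⟨gf⟩ := gf4_equiv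
  obtain hA' | hA' | hA' : Nat.card A = 2 ∨ Nat.card A = 3 ∨ Nat.card A = 4 := by omega
  · rw [hA'] at hc1
    by_cases hz : ∀ x : B, ¬ NZD x
    · exfalso
      obtain ⟨v, w, hv, hw, hve, hwe, hvw⟩ := hs (1, 0)
      obtain ⟨f⟩ := equiv_zmod_prime Nat.prime_two hA'
      have h01 : ∀ x : A, x = 0 ∨ x = 1 := by
        intro x
        have : ∀ y : ZMod 2, y = 0 ∨ y = 1 := by decide +kernel
        rcases this (f x) with h | h
        · left; exact f.injective (by rw [h, map_zero])
        · right; exact f.injective (by rw [h, map_one])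
      have key : ∀ v : A × B, v ≠ 0 → v ≠ (1, 0) → v.2 ≠ 0 := by
        rintro ⟨x, y⟩ h1 h2 rfl
        rcases h01 x with rfl | rfl
        · exact h1 rfl
        · exact h2 rfl
      have h2 : v.2 * w.2 = 0 := congrArg Prod.snd hvw
      exact hz v.2 ⟨key v hv.1 hve, w.2, key w hw.1 hwe, h2⟩
    · push Not at hz
      obtain ⟨x, hx⟩ := hz
      have hpos : 0 < Set.ncard {x : B | NZD x} := by
        rw [Set.ncard_pos]
        exact ⟨x, hx⟩
      have hB5 : Nat.card B ≤ 5 := by omega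
      obtain hB | hB | hB | hB :
        Nat.card B = 2 ∨ Nat.card B = 3 ∨ Nat.card B = 4 ∨ Nat.card B = 5 := by omega
      · exact absurd hx (no_nzd_of_prime (by norm_num) hB x)
      · exact absurd hx (no_nzd_of_prime (by norm_num) hB x)
      · obtain ⟨f⟩ := equiv_zmod_prime Nat.prime_two hA'
        rcases ring4 hB hx with ⟨⟨g⟩⟩ | ⟨⟨g⟩⟩ | ⟨⟨g⟩⟩
        · exact Or.inl (Or.inl ⟨RingEquiv.prodCongr f g⟩)
        · exact Or.inl (Or.inr (Or.inl ⟨RingEquiv.prodCongr f g⟩))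
        · exact absurd (hp.equiv (RingEquiv.prodCongr f g)) no_pair_8
      · exact absurd hx (no_nzd_of_prime (by norm_num) hB x)
  · rw [hA'] at hc1 hle
    obtain ⟨f⟩ := equiv_zmod_prime Nat.prime_three hA'
    obtain hB | hB | hB : Nat.card B = 3 ∨ Nat.card B = 4 ∨ Nat.card B = 5 := by omega
    · obtain ⟨g⟩ := equiv_zmod_prime Nat.prime_three hB
      exact Or.inl (Or.inr (Or.inr (Or.inl ⟨RingEquiv.prodCongr f g⟩)))
    · have h0 := hfield B (by omega)
      obtain ⟨g⟩ := field4_equiv (isField_of_no_nzd h0) (Field.toIsField (GaloisField 2 2)) hB gf4_card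
      exact Or.inl (Or.inr (Or.inr (Or.inr (Or.inl ⟨RingEquiv.prodCongr f g⟩))))
    · obtain ⟨g⟩ := equiv_zmod_prime Nat.prime_five hB
      exact absurd (hp.equiv (RingEquiv.prodCongr f g)) no_pair_15
  · rw [hA'] at hc1 hc2 hle
    have hB : Nat.card B = 4 := by omega
    rw [hB] at hc1 hc2
    have hA0 : ∀ x : A, ¬ NZD x := by
      intro x hx
      have hpos : 0 < Set.ncard {x : A | NZD x} := by
        rw [Set.ncard_pos]
        exact ⟨x, hx⟩
      omega
    obtain ⟨g1⟩ := field4_equiv (isField_of_no_nzd hA0) (Field.toIsField (GaloisField 2 2)) hA' gf4_card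
    obtain ⟨g2⟩ := field4_equiv (isField_of_no_nzd (hfield B (by omega)))
      (Field.toIsField (GaloisField 2 2)) hB gf4_card
    exact Or.inr ⟨RingEquiv.prodCongr g1 g2⟩

lemma nilp_prime {R : Type*} [CommRing R] [Finite R] [Nontrivial R]
    (hd : ∀ x : R, IsUnit x ∨ IsNilpotent x) {p : ℕ} (hp : p.Prime)
    (hc : Nat.card (nilradical R) = p) :
    (∀ x y : R, IsNilpotent x → IsNilpotent y → x * y = 0) ∧ Nat.card R = p ^ 2 ∧
      ∃ w : R, w ≠ 0 ∧ w * w = 0 := by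
  have : Nontrivial (nilradical R) := by
    rw [← Finite.one_lt_card_iff_nontrivial, hc]; exact hp.one_lt
  obtain ⟨⟨x, hx⟩, hx0⟩ := exists_ne (0 : nilradical R)
  have hx0' : x ≠ 0 := fun h => hx0 (Subtype.ext h)
  obtain ⟨w, hw0, hww, hxw⟩ := sq_zero_of_nilp hx0' (mem_nilradical.1 hx)
  have hspan : ∀ y : R, IsNilpotent y → ∃ r, y = r * w := by
    have hwn : w ∈ nilradical R := Ideal.mem_of_dvd _ hxw hx
    have hle : (Ideal.span {w}).toAddSubgroup ≤ (nilradical R).toAddSubgroup := by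
      intro z hz
      exact (Ideal.span_singleton_le_iff_mem _).2 hwn hz
    have hdvd := AddSubgroup.card_dvd_of_le hle
    have hc' : Nat.card (nilradical R).toAddSubgroup = p := hc
    rw [hc'] at hdvd
    have heq : (Ideal.span {w}).toAddSubgroup = (nilradical R).toAddSubgroup := by
      apply AddSubgroup.eq_of_le_of_card_ge hle
      rcases (Nat.dvd_prime hp).1 hdvd with h | h
      · exfalso
        rw [AddSubgroup.card_eq_one] at h
        have : w ∈ (Ideal.span {w}).toAddSubgroup := Ideal.mem_span_singleton_self w
        rw [h] at this
        exact hw0 this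
      · rw [hc', h]
    intro y hy
    have : y ∈ (nilradical R).toAddSubgroup := mem_nilradical.2 hy
    rw [← heq] at this
    obtain ⟨r, hr⟩ := Ideal.mem_span_singleton'.1 this
    exact ⟨r, hr.symm⟩
  have hwn : IsNilpotent w := ⟨2, by rw [sq, hww]⟩
  refine ⟨?_, ?_, w, hw0, hww⟩
  · intro x y hx hy
    obtain ⟨r, rfl⟩ := hspan x hx
    obtain ⟨s, rfl⟩ := hspan y hy
    linear_combination r * s * hww
  · let f : R →+ R := AddMonoidHom.mulRight w
    have hker : f.ker = (nilradical R).toAddSubgroup := by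
      ext z
      constructor
      · intro hz
        have hz' : z * w = 0 := hz
        refine mem_nilradical.2 ((hd z).resolve_left fun hu => hw0 ?_)
        exact (IsUnit.mul_right_eq_zero hu).1 hz'
      · intro hz
        obtain ⟨r, rfl⟩ := hspan z (mem_nilradical.1 hz)
        change r * w * w = 0
        rw [mul_assoc, hww, mul_zero]
    have hrange : f.range = (nilradical R).toAddSubgroup := by
      ext z
      constructor
      · rintro ⟨r, rfl⟩
        exact Ideal.mul_mem_left _ r (mem_nilradical.2 hwn)
      · intro hz
        obtain ⟨r, rfl⟩ := hspan z (mem_nilradical.1 hz)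
        exact ⟨r, rfl⟩
    have h1 := AddSubgroup.card_eq_card_quotient_mul_card_addSubgroup f.ker
    rw [Nat.card_congr (QuotientAddGroup.quotientKerEquivRange f).toEquiv, hker, hrange] at h1
    have hc' : Nat.card (nilradical R).toAddSubgroup = p := hc
    rw [hc'] at h1
    rw [h1, sq]

lemma local_list {R : Type*} [CommRing R] [Finite R] [Nontrivial R]
    (hd : ∀ x : R, IsUnit x ∨ IsNilpotent x) (hp : PairAll R)
    (h4 : 4 ≤ Set.ncard {v : R | NZD v}) : Lst R := by
  have h6 := card_le_six hp
  have hnz : ∀ x : R, NZD x ↔ x ≠ 0 ∧ IsNilpotent x := by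
    intro x
    constructor
    · intro hx
      exact ⟨hx.1, (hd x).resolve_left fun hu => not_nzd_unit hu hx⟩
    · rintro ⟨hx, hn⟩
      obtain ⟨w, hw0, hww, hxw⟩ := sq_zero_of_nilp hx hn
      refine ⟨hx, ?_⟩
      by_contra hcon
      push Not at hcon
      have hnu : ∀ k, x ^ k ≠ 0 := by
        intro k
        induction k with
        | zero => simp
        | succ k ih => rw [pow_succ']; exact hcon _ ih
      obtain ⟨k, hk⟩ := hn
      exact hnu k hk
  have hcard : Nat.card (nilradical R) = Set.ncard {v : R | NZD v} + 1 := by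
    have h1 : Nat.card (nilradical R) = (nilradical R : Set R).ncard := rfl
    have h2 : (nilradical R : Set R) = insert 0 {v : R | NZD v} := by
      ext x
      simp only [SetLike.mem_coe, mem_nilradical, Set.mem_insert_iff, Set.mem_ofPred_eq, hnz]
      by_cases hx : x = 0
      · simp [hx]
      · simp [hx]
    rw [h1, h2, Set.ncard_insert_of_notMem]
    intro h
    exact h.1 rfl
  obtain h | h | h : Set.ncard {v : R | NZD v} = 4 ∨ Set.ncard {v : R | NZD v} = 5 ∨
    Set.ncard {v : R | NZD v} = 6 := by omega
  · rw [h] at hcard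
    obtain ⟨-, hR, w, hw0, hww⟩ := nilp_prime hd Nat.prime_five hcard
    have hdvd := ringChar_dvd_card R
    rw [hR] at hdvd
    have hne := CharP.ringChar_ne_one (R := R)
    have hch : CharP R (ringChar R) := inferInstance
    obtain ⟨k, hk, hk'⟩ := (Nat.dvd_prime_pow Nat.prime_five).1 hdvd
    interval_cases k
    · exact absurd hk' (by simpa using hne)
    · rw [hk', pow_one] at hch
      have : Fact (Nat.Prime 5) := ⟨Nat.prime_five⟩
      exact Or.inl (Or.inr (Or.inr (Or.inr (Or.inr (Or.inr (dual_equiv 5 hR w hw0 hww))))))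
    · rw [hk'] at hch
      exact Or.inl (Or.inr (Or.inr (Or.inr (Or.inr (Or.inl
        (equiv_zmod_char (n := 5 ^ 2) (by norm_num) hR))))))
  · exfalso
    rw [h] at hcard
    have key : ∀ q : ℕ, q.Prime → q ∣ 6 → IsNilpotent (q : R) := by
      intro q hq hq6
      have : Fact q.Prime := ⟨hq⟩
      obtain ⟨x, hx⟩ := exists_prime_addOrderOf_dvd_card' (G := nilradical R) q (by rw [hcard]; exact hq6)
      have hx0 : x ≠ 0 := by
        rintro rfl
        rw [addOrderOf_zero] at hx
        exact hq.one_lt.ne hx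
      have hqx : q • x = 0 := by rw [← hx]; exact addOrderOf_nsmul_eq_zero x
      have hqx' : (q : R) * (x : R) = 0 := by
        have := congrArg Subtype.val hqx
        rw [← nsmul_eq_mul]
        simpa using this
      refine (hd q).resolve_left fun hu => hx0 (Subtype.ext ?_)
      exact (IsUnit.mul_right_eq_zero hu).1 hqx'
    have h2 := mem_nilradical.2 (key 2 Nat.prime_two (by norm_num))
    have h3 := mem_nilradical.2 (key 3 Nat.prime_three (by norm_num))
    have h1 := (nilradical R).sub_mem h3 h2
    have : ((3 : ℕ) : R) - ((2 : ℕ) : R) = 1 := by push_cast; ring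
    rw [this] at h1
    obtain ⟨k, hk⟩ := mem_nilradical.1 h1
    rw [one_pow] at hk
    exact one_ne_zero hk
  · exfalso
    rw [h] at hcard
    obtain ⟨hmul, -, -⟩ := nilp_prime hd (by norm_num : Nat.Prime 7) hcard
    obtain ⟨a, b, ha, hb, hab, -, h1, -⟩ := hp
    have hsub : {v : R | NZD v} ⊆ {a, b} ∪ {u : R | u ≠ 0 ∧ u ≠ a ∧ u ≠ b ∧ a * u = 0} := by
      intro v hv
      have hav := hmul a v ((hnz a).1 ha).2 ((hnz v).1 hv).2
      have hv0 := hv.1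
      simp only [Set.mem_union, Set.mem_insert_iff, Set.mem_singleton_iff, Set.mem_ofPred_eq]
      tauto
    have h3 := Set.ncard_le_ncard hsub (Set.toFinite _)
    have h5 := Set.ncard_union_le {a, b} {u : R | u ≠ 0 ∧ u ≠ a ∧ u ≠ b ∧ a * u = 0}
    have h6 := Set.ncard_pair hab
    split_ifs at h1 <;> omega

lemma all_list {R : Type*} [CommRing R] [Finite R] [Nontrivial R] (hp : PairAll R) (hs : NoStar R)
    (h4 : 4 ≤ Set.ncard {v : R | NZD v}) : Lst R := by
  rcases dichotomy R with hd | ⟨e, he, he0, he1⟩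
  · exact local_list hd hp h4
  · obtain ⟨A, B, _, _, _, _, _, _, ⟨f⟩⟩ := split_prod R e he he0 he1
    rcases le_total (Nat.card A) (Nat.card B) with hle | hle
    · exact Lst.equiv f (prod_list A B (hp.equiv f) (hs.equiv f) hle)
    · have f' := f.trans (RingEquiv.prodComm (R := A) (S := B))
      exact Lst.equiv f' (prod_list B A (hp.equiv f') (hs.equiv f') hle)

lemma card_zdv (R : Type*) [CommRing R] : Nat.card (ZDV R) = Set.ncard {v : R | NZD v} := rfl

lemma psi_eq {R S : Type*} [CommRing R] [CommRing S] [Finite R] (h : gammaA (zdGraph R) = 2)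
    (e : R ≃+* S) {k n : ℕ} (hS : HasCol S k ∧ Set.ncard {v : S | NZD v} = n) (hn : n < 2 * (k + 1)) :
    psiG (zdGraph R) = k := by
  have h1 := le_psi h (hS.1.equiv e)
  have h2 := psi_le h
  rw [card_zdv, ← ncard_equiv e.toEquiv {v : R | NZD v} {v : S | NZD v} (fun x => nzd_equiv e), hS.2] at h2
  omega

/-- For a finite commutative ring `R` with `γ_a(Γ(R)) = 2`:
`ψ_g(Γ(R)) = 2` iff `R` is isomorphic to one of `ℤ₂ × ℤ₄`, `ℤ₂ × ℤ₂[X]/(X²)`,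
`ℤ₃ × ℤ₃`, `ℤ₃ × 𝔽₄`, `ℤ₂₅`, `ℤ₅[X]/(X²)`; and `ψ_g(Γ(R)) = 3` iff `R ≅ 𝔽₄ × 𝔽₄`. -/
theorem stmt19 (R : Type*) [CommRing R] [Finite R] [Nontrivial R]
    (h : gammaA (zdGraph R) = 2) :
    (psiG (zdGraph R) = 2 ↔
      (Nonempty (R ≃+* (ZMod 2 × ZMod 4)) ∨
        Nonempty (R ≃+* (ZMod 2 × (Polynomial (ZMod 2) ⧸
          Ideal.span {(Polynomial.X : Polynomial (ZMod 2)) ^ 2}))) ∨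
        Nonempty (R ≃+* (ZMod 3 × ZMod 3)) ∨
        Nonempty (R ≃+* (ZMod 3 × GaloisField 2 2)) ∨
        Nonempty (R ≃+* ZMod 25) ∨
        Nonempty (R ≃+* (Polynomial (ZMod 5) ⧸
          Ideal.span {(Polynomial.X : Polynomial (ZMod 5)) ^ 2})))) ∧
    (psiG (zdGraph R) = 3 ↔
      Nonempty (R ≃+* (GaloisField 2 2 × GaloisField 2 2))) := by
  have back1 : (Nonempty (R ≃+* (ZMod 2 × ZMod 4)) ∨
        Nonempty (R ≃+* (ZMod 2 × (Polynomial (ZMod 2) ⧸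
          Ideal.span {(Polynomial.X : Polynomial (ZMod 2)) ^ 2}))) ∨
        Nonempty (R ≃+* (ZMod 3 × ZMod 3)) ∨
        Nonempty (R ≃+* (ZMod 3 × GaloisField 2 2)) ∨
        Nonempty (R ≃+* ZMod 25) ∨
        Nonempty (R ≃+* (Polynomial (ZMod 5) ⧸
          Ideal.span {(Polynomial.X : Polynomial (ZMod 5)) ^ 2}))) → psiG (zdGraph R) = 2 := by
    obtain ⟨gf⟩ := gf4_equiv
    have : Fact (Nat.Prime 5) := ⟨Nat.prime_five⟩
    obtain ⟨q2⟩ := qd_equiv 2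
    obtain ⟨q5⟩ := qd_equiv 5
    rintro (⟨⟨f⟩⟩ | ⟨⟨f⟩⟩ | ⟨⟨f⟩⟩ | ⟨⟨f⟩⟩ | ⟨⟨f⟩⟩ | ⟨⟨f⟩⟩)
    · exact psi_eq h f col1 (by norm_num)
    · exact psi_eq h (f.trans (RingEquiv.prodCongr (RingEquiv.refl _) q2.symm)) col2 (by norm_num)
    · exact psi_eq h f col3 (by norm_num)
    · exact psi_eq h (f.trans (RingEquiv.prodCongr (RingEquiv.refl _) gf)) col4 (by norm_num)
    · exact psi_eq h f col5 (by norm_num)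
    · exact psi_eq h (f.trans q5.symm) col6 (by norm_num)
  have back2 : Nonempty (R ≃+* (GaloisField 2 2 × GaloisField 2 2)) → psiG (zdGraph R) = 3 := by
    obtain ⟨gf⟩ := gf4_equiv
    rintro ⟨f⟩
    exact psi_eq h (f.trans (RingEquiv.prodCongr gf gf)) col7 (by norm_num)
  have fwd : 2 ≤ psiG (zdGraph R) → Lst R := by
    intro h2
    have h3 := psi_le h
    rw [card_zdv] at h3
    exact all_list (pair_of h) (noStar_of h h2) (by omega)
  refine ⟨⟨fun h2 => ?_, back1⟩, ⟨fun h3 => ?_, back2⟩⟩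
  · rcases fwd h2.ge with hl | hl
    · exact hl
    · have := back2 hl
      omega
  · rcases fwd (by omega) with hl | hl
    · have := back1 hl
      omega
    · exact hl
end
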